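/- arXiv:2008.06554 — 7 statements merged into one kernel-verified Lean document; each statement's English description precedes it below -/
import Mathlib

section
/- Let α be a finite type, β a finite nonempty type, and x ∈ α. For every function g from the set of functions (α ∖ {x}) → β to β, the probability, over f drawn uniformly at random from the set of all functions α → β, that f(x) = g(the restriction of f to α ∖ {x}), is exactly 1/|β|. -/
/-- Probability of `P` under the uniform distribution on a finite type `Ω`. -/
noncomputable def unifProb {Ω : Type} [Fintype Ω] (P : Ω → Prop) : ℝ :=
  (Set.ncard {ω : Ω | P ω} : ℝ) / (Fintype.card Ω : ℝ)

/-- **Fresh-point (lazy sampling) lemma.**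
For a uniformly random function `f : α → β` and any predictor `g` that sees `f`
restricted to `α ∖ {x}`, the probability that `f x = g (f restricted away from x)`
is exactly `1/|β|`. -/
theorem stmt2 {α β : Type} [Fintype α] [DecidableEq α] [Fintype β] [Nonempty β] (x : α)
    (g : ({y : α // y ≠ x} → β) → β) :
    unifProb (fun f : α → β => f x = g (fun y => f y.1)) = 1 / (Fintype.card β : ℝ) := by
  classical
  let e := Equiv.funSplitAt x β
  have hcard : Fintype.card (α → β) =
      Fintype.card β * Fintype.card ({y : α // y ≠ x} → β) := by
    rw [Fintype.card_congr e, Fintype.card_prod]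
  have hset : {f : α → β | f x = g (fun y => f y.1)} =
      Set.range (fun h : {y : α // y ≠ x} → β => e.symm (g h, h)) := by
    ext f
    simp only [Set.mem_setOf_eq, Set.mem_range]
    constructor
    · intro hf
      refine ⟨fun y => f y.1, ?_⟩
      rw [Equiv.symm_apply_eq]
      exact Prod.ext hf.symm rfl
    · rintro ⟨h, hf⟩
      rw [Equiv.symm_apply_eq] at hf
      have h1 : g h = f x := congrArg Prod.fst hf
      have h2 : h = fun y => f y.1 := congrArg Prod.snd hf
      rw [← h1, ← h2]
  have hinj : Function.Injective (fun h : {y : α // y ≠ x} → β => e.symm (g h, h)) := by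
    intro a b hab
    exact congrArg Prod.snd (e.symm.injective hab)
  have hn : Set.ncard {f : α → β | f x = g (fun y => f y.1)} =
      Fintype.card ({y : α // y ≠ x} → β) := by
    rw [hset, ← Set.image_univ, Set.ncard_image_of_injective _ hinj, Set.ncard_univ,
      Nat.card_eq_fintype_card]
  have hβ : (Fintype.card β : ℝ) ≠ 0 := by
    exact_mod_cast Fintype.card_ne_zero
  have hγ : (Fintype.card ({y : α // y ≠ x} → β) : ℝ) ≠ 0 := by
    exact_mod_cast Fintype.card_ne_zero
  unfold unifProb
  rw [hn]
  have hcard' : (Fintype.card (α → β) : ℝ) =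
      Fintype.card β * Fintype.card ({y : α // y ≠ x} → β) := by
    rw [← Nat.cast_mul, ← hcard]
  rw [div_eq_div_iff (by rw [hcard']; exact mul_ne_zero hβ hγ) hβ, hcard']
  ring
end

section
/- Fix integers n, u, v, w with u ≥ 1, 2u ≤ n, v ≥ 2, w ≥ 2, and let Q ≥ 1 be an integer. Let nxt be any deterministic adaptive oracle algorithm with input space ({0,1}^u)^v, with query sequence q_1, q_2, … produced by running it with oracle RO on input X. The probability over a uniformly random oracle RO : {0,1}^n → {0,1}^n and a uniformly random input X ∈ ({0,1}^u)^v that there exist j with 1 ≤ j ≤ w−1 and k with 1 ≤ k ≤ Q such that q_k = s_{j+1} while q_t ≠ s_j for all t < k, is at most (w−1)·Q·2^(−u). -/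
/-- Bit strings of length `k`. -/
abbrev Bits (k : ℕ) := Fin k → Bool

/-- The `j`-th bit (`0`-based) of a bit string, `false` out of range. -/
def bitAt {k : ℕ} (y : Bits k) (j : ℕ) : Bool := if h : j < k then y ⟨j, h⟩ else false

/-- The `i`-th block (`0`-based) of the input `X = (x_1, …, x_v)`. -/
def getX {u v : ℕ} (X : Fin v → Bits u) (i : ℕ) : Bits u :=
  if h : i < v then X ⟨i, h⟩ else fun _ => false
/-- The SimLine query string built from the step counter `k` (`0`-based, so paper index
`k+1`) and the current chain value `r`: the concatenation of `x_{(k mod v)+1}` (1-based),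
`r`, and `n − 2u` zeros. -/
def simStr (n u v : ℕ) (X : Fin v → Bits u) (k : ℕ) (r : Bits u) : Bits n := fun j =>
  if (j : ℕ) < u then bitAt (getX X (k % v)) (j : ℕ)
  else if (j : ℕ) < 2 * u then bitAt r ((j : ℕ) - u)
  else false

/-- `simR n u v RO X k` is the paper's `r_{k+1}`:  `r_1 = 0^u` and
`r_{i+1} = ` the first `u` bits of `RO(s_i)`. -/
def simR (n u v : ℕ) (RO : Bits n → Bits n) (X : Fin v → Bits u) : ℕ → Bits u
  | 0 => fun _ => false
  | k + 1 => fun j => bitAt (RO (simStr n u v X k (simR n u v RO X k))) (j : ℕ)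

/-- `simS n u v RO X k` is the paper's `s_{k+1}`. -/
def simS (n u v : ℕ) (RO : Bits n → Bits n) (X : Fin v → Bits u) (k : ℕ) : Bits n :=
  simStr n u v X k (simR n u v RO X k)
/-- Answers to the first `t` queries of a deterministic adaptive oracle algorithm whose
next-query function is `f`. -/
def advAns (n : ℕ) (RO : Bits n → Bits n) (f : List (Bits n) → Bits n) : ℕ → List (Bits n)
  | 0 => []
  | t + 1 => advAns n RO f t ++ [RO (f (advAns n RO f t))]

/-- The `(t+1)`-st query (so the paper's `q_{t+1}`) of the adaptive algorithm `f`. -/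
def advQ (n : ℕ) (RO : Bits n → Bits n) (f : List (Bits n) → Bits n) (t : ℕ) : Bits n :=
  f (advAns n RO f t)


namespace NoJump

def headU {n : ℕ} (u : ℕ) (z : Bits n) : Bits u := fun j => bitAt z (j : ℕ)

def rPart {n : ℕ} (u : ℕ) (z : Bits n) : Bits u := fun j => bitAt z (u + (j : ℕ))

def repl {n u : ℕ} (z : Bits n) (y : Bits u) : Bits n := fun j =>
  if h : (j : ℕ) < u then y ⟨j, h⟩ else z j

theorem headU_repl {n u : ℕ} (hn : u ≤ n) (z : Bits n) (y : Bits u) :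
    headU u (repl z y) = y := by
  funext j
  have h : (j : ℕ) < n := lt_of_lt_of_le j.2 hn
  simp [headU, repl, bitAt, h]

theorem eq_of_repl {n u : ℕ} (z z' : Bits n) (y y' : Bits u)
    (h : repl z y = repl z' y') (hp : headU u z = headU u z') : z = z' := by
  funext j
  by_cases hj : (j : ℕ) < u
  · have := congrFun hp ⟨j, hj⟩
    simpa [headU, bitAt] using this
  · have := congrFun h j
    simpa [repl, hj] using this

theorem rPart_simStr {n u v : ℕ} (hn : 2 * u ≤ n) (X : Fin v → Bits u) (k : ℕ) (r : Bits u) :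
    rPart u (simStr n u v X k r) = r := by
  funext j
  have hj := j.2
  have h1 : u + (j : ℕ) < n := by omega
  have h2 : u + (j : ℕ) < 2 * u := by omega
  simp [rPart, simStr, bitAt, h1, h2]

theorem simR_congr {n u v : ℕ} (R R' : Bits n → Bits n) (X : Fin v → Bits u) (s : Bits n)
    (hR : ∀ z, z ≠ s → R' z = R z) (i : ℕ) (hi : ∀ m < i, simS n u v R X m ≠ s) :
    simR n u v R' X i = simR n u v R X i := by
  induction i with
  | zero => rfl
  | succ i ih =>
    have h := ih (fun m hm => hi m (by omega))
    have h2 := hR _ (hi i (by omega))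
    unfold simS at h2
    simp only [simR]
    rw [h, h2]

theorem advAns_congr {n : ℕ} (R R' : Bits n → Bits n) (f : List (Bits n) → Bits n) (s : Bits n)
    (hR : ∀ z, z ≠ s → R' z = R z) (k : ℕ) (hk : ∀ t < k, advQ n R f t ≠ s) :
    advAns n R' f k = advAns n R f k := by
  induction k with
  | zero => rfl
  | succ k ih =>
    have h := ih (fun m hm => hk m (by omega))
    have h2 := hR _ (hk k (by omega))
    unfold advQ at h2
    simp only [advAns]
    rw [h, h2]

/-- The elementary bad event: `s_i` is fresh in the chain, not queried before time `k`, and the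
`k`-th query contains the prefix of the answer at `s_i`. -/
def Bad (n u v : ℕ) (nxt : (Fin v → Bits u) → List (Bits n) → Bits n) (i k : ℕ)
    (ω : (Bits n → Bits n) × (Fin v → Bits u)) : Prop :=
  (∀ m < i, simS n u v ω.1 ω.2 m ≠ simS n u v ω.1 ω.2 i) ∧
  (∀ t < k, advQ n ω.1 (nxt ω.2) t ≠ simS n u v ω.1 ω.2 i) ∧
  headU u (ω.1 (simS n u v ω.1 ω.2 i)) = rPart u (advQ n ω.1 (nxt ω.2) k)

open Classical in
noncomputable def resample (n u v : ℕ) (i : ℕ)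
    (p : ((Bits n → Bits n) × (Fin v → Bits u)) × Bits u) :
    (Bits n → Bits n) × (Fin v → Bits u) :=
  (Function.update p.1.1 (simS n u v p.1.1 p.1.2 i)
    (repl (p.1.1 (simS n u v p.1.1 p.1.2 i)) p.2), p.1.2)

theorem resample_facts {n u v : ℕ} (nxt : (Fin v → Bits u) → List (Bits n) → Bits n) (i k : ℕ)
    (R : Bits n → Bits n) (X : Fin v → Bits u) (y : Bits u) (hb : Bad n u v nxt i k (R, X)) :
    simS n u v (resample n u v i ((R, X), y)).1 X i = simS n u v R X i ∧
    advQ n (resample n u v i ((R, X), y)).1 (nxt X) k = advQ n R (nxt X) k ∧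
    (resample n u v i ((R, X), y)).1 (simS n u v R X i) = repl (R (simS n u v R X i)) y ∧
    ∀ z, z ≠ simS n u v R X i → (resample n u v i ((R, X), y)).1 z = R z := by
  have hoff : ∀ z, z ≠ simS n u v R X i → (resample n u v i ((R, X), y)).1 z = R z := by
    intro z hz
    simp [resample, Function.update_of_ne hz]
  obtain ⟨h1, h2, h3⟩ := hb
  refine ⟨?_, ?_, by simp [resample], hoff⟩
  · have := simR_congr R _ X _ hoff i h1
    unfold simS at this ⊢
    rw [this]
  · have := advAns_congr R _ (nxt X) _ hoff k h2
    unfold advQ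
    rw [this]

theorem resample_inj {n u v : ℕ} (hn : u ≤ n)
    (nxt : (Fin v → Bits u) → List (Bits n) → Bits n) (i k : ℕ)
    (p p' : ((Bits n → Bits n) × (Fin v → Bits u)) × Bits u)
    (hb : Bad n u v nxt i k p.1) (hb' : Bad n u v nxt i k p'.1)
    (h : resample n u v i p = resample n u v i p') : p = p' := by
  obtain ⟨⟨R, X⟩, y⟩ := p
  obtain ⟨⟨R', X'⟩, y'⟩ := p'
  have hX : X = X' := congrArg Prod.snd h
  subst hX
  obtain ⟨a1, a2, a3, a4⟩ := resample_facts nxt i k R X y hb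
  obtain ⟨b1, b2, b3, b4⟩ := resample_facts nxt i k R' X y' hb'
  have hs : simS n u v R' X i = simS n u v R X i := by rw [← a1, ← b1, h]
  have hq : advQ n R' (nxt X) k = advQ n R (nxt X) k := by rw [← a2, ← b2, h]
  have c := hb.2.2
  have c' := hb'.2.2
  simp only at c c'
  rw [hq, hs] at c'
  rw [← h, hs] at b3
  rw [← h, hs] at b4
  have e := a3.symm.trans b3
  have hy : y = y' := by rw [← headU_repl hn _ y, e, headU_repl hn]
  have hv := eq_of_repl _ _ _ _ e (c.trans c'.symm)
  have hRR : R = R' := by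
    funext z
    by_cases hz : z = simS n u v R X i
    · rw [hz, hv]
    · rw [← a4 z hz, b4 z hz]
  rw [hRR, hy]

theorem bad_card {n u v : ℕ} (hn : u ≤ n)
    (nxt : (Fin v → Bits u) → List (Bits n) → Bits n) (i k : ℕ) :
    Set.ncard {ω | Bad n u v nxt i k ω} * 2 ^ u ≤
      Fintype.card ((Bits n → Bits n) × (Fin v → Bits u)) := by
  have h1 : Set.ncard ({ω | Bad n u v nxt i k ω} ×ˢ (Set.univ : Set (Bits u))) =
      Set.ncard {ω | Bad n u v nxt i k ω} * 2 ^ u := by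
    rw [Set.ncard_prod, Set.ncard_univ]
    simp
  rw [← h1, ← Nat.card_eq_fintype_card, ← Set.ncard_univ]
  refine Set.ncard_le_ncard_of_injOn (resample n u v i) (fun _ _ => Set.mem_univ _) ?_
    (Set.toFinite _)
  intro p hp p' hp' h
  exact resample_inj hn nxt i k p p' hp.1 hp'.1 h

theorem event_bad {n u v : ℕ} (hn : 2 * u ≤ n)
    (nxt : (Fin v → Bits u) → List (Bits n) → Bits n) (j k : ℕ)
    (ω : (Bits n → Bits n) × (Fin v → Bits u))
    (h1 : advQ n ω.1 (nxt ω.2) k = simS n u v ω.1 ω.2 (j + 1))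
    (h2 : ∀ t < k, advQ n ω.1 (nxt ω.2) t ≠ simS n u v ω.1 ω.2 j) :
    ∃ i ≤ j, Bad n u v nxt i k ω := by
  classical
  have hex : ∃ i, simS n u v ω.1 ω.2 i = simS n u v ω.1 ω.2 j := ⟨j, rfl⟩
  have hi := Nat.find_spec hex
  refine ⟨Nat.find hex, Nat.find_min' hex rfl, ?_, ?_, ?_⟩
  · intro m hm
    rw [hi]
    exact Nat.find_min hex hm
  · rw [hi]; exact h2
  · rw [hi, h1]
    conv_rhs => rw [simS, rPart_simStr hn]
    rfl

end NoJump

/-- **Union-bound corollary of Lemma `nojump`.**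
In the SimLine setting, for any deterministic adaptive oracle algorithm `nxt` and any
bound `Q ≥ 1` on the number of queries, the probability over uniformly random `(RO, X)`
that for some `1 ≤ j ≤ w−1` and some `1 ≤ k ≤ Q` the `k`-th query equals `s_{j+1}` while
no earlier query equals `s_j`, is at most `(w−1)·Q·2^(−u)`. -/
theorem stmt6 (n u v w : ℕ) (hu : 1 ≤ u) (hn : 2 * u ≤ n) (hv : 2 ≤ v) (hw : 2 ≤ w)
    (Q : ℕ) (hQ : 1 ≤ Q)
    (nxt : (Fin v → Bits u) → List (Bits n) → Bits n) :
    unifProb (fun ω : (Bits n → Bits n) × (Fin v → Bits u) =>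
      ∃ j, 1 ≤ j ∧ j ≤ w - 1 ∧ ∃ k, 1 ≤ k ∧ k ≤ Q ∧
        advQ n ω.1 (nxt ω.2) (k - 1) = simS n u v ω.1 ω.2 j ∧
        ∀ t < k - 1, advQ n ω.1 (nxt ω.2) t ≠ simS n u v ω.1 ω.2 (j - 1)) ≤
    ((w : ℝ) - 1) * Q / (2 : ℝ) ^ u := by
  have hsub : {ω : (Bits n → Bits n) × (Fin v → Bits u) | ∃ j, 1 ≤ j ∧ j ≤ w - 1 ∧
      ∃ k, 1 ≤ k ∧ k ≤ Q ∧
        advQ n ω.1 (nxt ω.2) (k - 1) = simS n u v ω.1 ω.2 j ∧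
        ∀ t < k - 1, advQ n ω.1 (nxt ω.2) t ≠ simS n u v ω.1 ω.2 (j - 1)} ⊆
      ⋃ p ∈ Finset.range (w - 1) ×ˢ Finset.range Q, {ω | NoJump.Bad n u v nxt p.1 p.2 ω} := by
    rintro ω ⟨j, hj1, hj2, k, hk1, hk2, h1, h2⟩
    obtain ⟨j, rfl⟩ : ∃ j', j = j' + 1 := ⟨j - 1, by omega⟩
    obtain ⟨i, hi, hb⟩ := NoJump.event_bad hn nxt j (k - 1) ω h1 h2
    simp only [Set.mem_iUnion]
    refine ⟨(i, k - 1), ?_, hb⟩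
    simp only [Finset.mem_product, Finset.mem_range]
    omega
  have hN : 0 < Fintype.card ((Bits n → Bits n) × (Fin v → Bits u)) := Fintype.card_pos
  have hcard := (Set.ncard_le_ncard hsub (Set.toFinite _)).trans
    (Finset.set_ncard_biUnion_le _ _)
  have hsum : (∑ p ∈ Finset.range (w - 1) ×ˢ Finset.range Q,
      Set.ncard {ω | NoJump.Bad n u v nxt p.1 p.2 ω}) * 2 ^ u ≤
      ((w - 1) * Q) * Fintype.card ((Bits n → Bits n) × (Fin v → Bits u)) := by
    rw [Finset.sum_mul]
    refine (Finset.sum_le_card_nsmul _ _ _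
      (fun p _ => NoJump.bad_card (by omega) nxt p.1 p.2)).trans ?_
    simp
  have hfin := (Nat.mul_le_mul_right (2 ^ u) hcard).trans hsum
  unfold unifProb
  rw [div_le_div_iff₀ (by exact_mod_cast hN) (by positivity)]
  have hw' : ((w : ℝ) - 1) = ((w - 1 : ℕ) : ℝ) := by
    rw [Nat.cast_sub (by omega)]; simp
  rw [hw']
  exact_mod_cast hfin
end

section
/- In the Line setting, let nxt be any deterministic adaptive oracle algorithm with input space ({0,1}^u)^v, with query sequence q_1, q_2, … produced by running it with oracle RO on input X. For every j ∈ {1,…,w}, every b ∈ {1,…,p}, every sequence (a_1,…,a_b) ∈ {1,…,v}^b, and every query position t ≥ 1, the probability over uniformly random (RO, X) that q_t = e'_b while q_{t'} ≠ e'_{b−1} for all t' < t is at most 2^(−u), where e'_0,…,e'_b are the branch entries determined by j and (a_1,…,a_b). -/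
/-- The integer encoded by the first `κ` bits of a bit string. -/
def natOf {n : ℕ} (y : Bits n) (κ : ℕ) : ℕ :=
  ∑ j ∈ Finset.range κ, if bitAt y j then 2 ^ j else 0

/-- `⟨i, x, ρ⟩` : the `n`-bit concatenation of the `W`-bit binary encoding of `i`, the
`u`-bit strings `x` and `ρ`, and trailing zeros. -/
def lineStr (n W u : ℕ) (i : ℕ) (x ρ : Bits u) : Bits n := fun j =>
  if (j : ℕ) < W then Nat.testBit i (j : ℕ)
  else if (j : ℕ) < W + u then bitAt x ((j : ℕ) - W)
  else if (j : ℕ) < W + 2 * u then bitAt ρ ((j : ℕ) - W - u)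
  else false

/-- `lineChain n u v W κ RO X k = (ℓ_{k+1} − 1, r_{k+1})` : the Line chain, with the
pointer stored `0`-based.  `ℓ_1 = 1, r_1 = 0^u`; `e_i = ⟨i, x_{ℓ_i}, r_i⟩`;
`ℓ_{i+1} − 1` is the integer encoded by the first `κ` bits of `RO(e_i)` (reduced mod
`v`, which is the identity when `v = 2^κ`), and `r_{i+1}` is the `u` bits of `RO(e_i)`
in positions `κ+1, …, κ+u`. -/
def lineChain (n u v W κ : ℕ) (RO : Bits n → Bits n) (X : Fin v → Bits u) :
    ℕ → ℕ × Bits u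
  | 0 => (0, fun _ => false)
  | k + 1 =>
    let c := lineChain n u v W κ RO X k
    let e := lineStr n W u (k + 1) (getX X (c.1 % v)) c.2
    (natOf (RO e) κ % v, fun j => bitAt (RO e) (κ + (j : ℕ)))

/-- `lineE n u v W κ RO X k` is the paper's `e_{k+1}`. -/
def lineE (n u v W κ : ℕ) (RO : Bits n → Bits n) (X : Fin v → Bits u) (k : ℕ) : Bits n :=
  lineStr n W u (k + 1) (getX X ((lineChain n u v W κ RO X k).1 % v))
    (lineChain n u v W κ RO X k).2

/-- `branchE n u v W κ RO X j a c` is the branch entry `e'_c` determined by the paper's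
(1-based) index `j` and the (0-based) sequence `a` (only `a 1, …, a c` matter):
`e'_0 = ⟨j+1, x_{ℓ_{j+1}}, r_{j+1}⟩ = e_{j+1}`, and for `c ≥ 1`,
`e'_c = ⟨j+c+1, x_{a_c}, ρ_c⟩` where `ρ_c` is the `u` bits of `RO(e'_{c−1})` in
positions `κ+1, …, κ+u`. -/
def branchE (n u v W κ : ℕ) (RO : Bits n → Bits n) (X : Fin v → Bits u) (j : ℕ)
    (a : ℕ → Fin v) : ℕ → Bits n
  | 0 => lineE n u v W κ RO X j
  | c + 1 => lineStr n W u (j + c + 2) (X (a (c + 1)))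
      (fun t => bitAt (RO (branchE n u v W κ RO X j a c)) (κ + (t : ℕ)))
theorem lineStr_idx_ne {n W u : ℕ} (hWn : W ≤ n) {i k : ℕ} (hik : i < k) (hk : k < 2 ^ W)
    (x ρ x' ρ' : Bits u) : lineStr n W u i x ρ ≠ lineStr n W u k x' ρ' := by
  intro h
  have : i = k := by
    apply Nat.eq_of_testBit_eq
    intro m
    by_cases hm : m < W
    · have := congrFun h ⟨m, lt_of_lt_of_le hm hWn⟩
      simpa [lineStr, hm] using this
    · have h2 : 2 ^ W ≤ 2 ^ m := Nat.pow_le_pow_right (by norm_num) (by omega)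
      rw [Nat.testBit_lt_two_pow (by omega), Nat.testBit_lt_two_pow (by omega)]
  omega

theorem lineStr_snd_inj {n W u : ℕ} (hn : W + 2 * u ≤ n) {i : ℕ} {x ρ x' ρ' : Bits u}
    (h : lineStr n W u i x ρ = lineStr n W u i x' ρ') : ρ = ρ' := by
  funext m
  have hm := m.2
  have := congrFun h ⟨W + u + m, by omega⟩
  have h1 : ¬ (W + u + (m : ℕ) < W) := by omega
  have h3 : W + u + (m : ℕ) < W + 2 * u := by omega
  have h4 : W + u + (m : ℕ) - W - u = m := by omega
  simpa [lineStr, h1, h3, h4, bitAt] using this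

theorem lineChain_congr {n u v W κ : ℕ} {RO RO' : Bits n → Bits n} (X : Fin v → Bits u) (k : ℕ)
    (H : ∀ i < k + 1, ∀ x ρ, RO' (lineStr n W u i x ρ) = RO (lineStr n W u i x ρ)) :
    lineChain n u v W κ RO' X k = lineChain n u v W κ RO X k := by
  induction k with
  | zero => rfl
  | succ k ih =>
    have ih' := ih (fun i hi => H i (by omega))
    simp only [lineChain, ih', H (k + 1) (by omega)]

theorem branchE_congr {n u v W κ : ℕ} {RO RO' : Bits n → Bits n} (X : Fin v → Bits u) (j : ℕ)
    (a : ℕ → Fin v) (c : ℕ)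
    (H : ∀ i < j + c + 1, ∀ x ρ, RO' (lineStr n W u i x ρ) = RO (lineStr n W u i x ρ)) :
    branchE n u v W κ RO' X j a c = branchE n u v W κ RO X j a c := by
  induction c with
  | zero => simp only [branchE, lineE, lineChain_congr X j H]
  | succ c ih =>
    have ih' := ih (fun i hi => H i (by omega))
    have hform : ∃ x ρ, branchE n u v W κ RO X j a c = lineStr n W u (j + c + 1) x ρ := by
      cases c with
      | zero => exact ⟨_, _, rfl⟩
      | succ c => exact ⟨_, _, rfl⟩
    obtain ⟨x, ρ, hx⟩ := hform
    simp only [branchE, ih', hx, H (j + c + 1) (by omega)]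

theorem branchE_form {n u v W κ : ℕ} (RO : Bits n → Bits n) (X : Fin v → Bits u) (j : ℕ)
    (a : ℕ → Fin v) (c : ℕ) :
    ∃ x ρ, branchE n u v W κ RO X j a c = lineStr n W u (j + c + 1) x ρ := by
  cases c with
  | zero => exact ⟨_, _, rfl⟩
  | succ c => exact ⟨_, _, rfl⟩

theorem branchE_update {n u v W κ : ℕ} (hWn : W ≤ n) (RO : Bits n → Bits n)
    (X : Fin v → Bits u) (j : ℕ) (a : ℕ → Fin v) (c : ℕ) (hc : j + c + 1 < 2 ^ W) (y : Bits n) :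
    branchE n u v W κ (Function.update RO (branchE n u v W κ RO X j a c) y) X j a c
      = branchE n u v W κ RO X j a c := by
  apply branchE_congr
  intro i hi x ρ
  obtain ⟨x', ρ', h⟩ := branchE_form (W := W) (κ := κ) RO X j a c
  rw [h, Function.update_of_ne (lineStr_idx_ne hWn hi hc _ _ _ _)]

theorem advAns_update {n : ℕ} (RO : Bits n → Bits n) (f : List (Bits n) → Bits n) (e y : Bits n)
    (t : ℕ) (h : ∀ t' < t, advQ n RO f t' ≠ e) :
    advAns n (Function.update RO e y) f t = advAns n RO f t := by
  induction t with
  | zero => rfl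
  | succ t ih =>
    have ih' := ih (fun i hi => h i (by omega))
    have h2 : f (advAns n RO f t) ≠ e := h t (by omega)
    simp only [advAns, ih', Function.update_of_ne h2]

/-- Overwrite the `u` bits from position `κ` on. -/
def setBits {n u : ℕ} (κ : ℕ) (y : Bits n) (s : Bits u) : Bits n := fun i =>
  if κ ≤ (i : ℕ) ∧ (i : ℕ) < κ + u then bitAt s ((i : ℕ) - κ) else y i

theorem setBits_inj {n u κ : ℕ} (hn : κ + u ≤ n) {y y' : Bits n} {s s' : Bits u}
    (h : setBits κ y s = setBits κ y' s')
    (hy : (fun t : Fin u => bitAt y (κ + (t : ℕ))) = fun t : Fin u => bitAt y' (κ + (t : ℕ))) :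
    y = y' ∧ s = s' := by
  constructor
  · funext i
    by_cases hi : κ ≤ (i : ℕ) ∧ (i : ℕ) < κ + u
    · have := congrFun hy ⟨i - κ, by omega⟩
      have h4 : κ + ((i : ℕ) - κ) = i := by omega
      simpa [bitAt, h4] using this
    · have := congrFun h i
      simpa [setBits, hi] using this
  · funext m
    have hm := m.2
    have := congrFun h ⟨κ + m, by omega⟩
    simpa [setBits, bitAt] using this

/-- **Fixed-path guessing claim inside the proof of Lemma 3.3.**
In the Line setting, for any deterministic adaptive oracle algorithm `nxt`, any
`j ∈ {1,…,w}`, `b ∈ {1,…,p}`, sequence `a` and query position `t ≥ 1`, the probability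
over uniformly random `(RO, X)` that the `t`-th query equals the branch entry `e'_b`
while no earlier query equals `e'_{b−1}` is at most `2^(−u)`. -/
theorem stmt7 (n u v w κ p W : ℕ)
    (hu : 1 ≤ u) (hw : 2 ≤ w) (hκ : 1 ≤ κ) (hv : v = 2 ^ κ)
    (hp : p = ⌈(Real.logb 2 w) ^ 2⌉₊) (hW : W = Nat.clog 2 (w + p + 2))
    (hn1 : W + 2 * u ≤ n) (hn2 : κ + u ≤ n)
    (nxt : (Fin v → Bits u) → List (Bits n) → Bits n)
    (j b t : ℕ) (hj1 : 1 ≤ j) (hjw : j ≤ w) (hb1 : 1 ≤ b) (hbp : b ≤ p) (ht : 1 ≤ t)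
    (a : ℕ → Fin v) :
    unifProb (fun ω : (Bits n → Bits n) × (Fin v → Bits u) =>
      advQ n ω.1 (nxt ω.2) (t - 1) = branchE n u v W κ ω.1 ω.2 j a b ∧
      ∀ t' < t - 1, advQ n ω.1 (nxt ω.2) t' ≠ branchE n u v W κ ω.1 ω.2 j a (b - 1)) ≤
    1 / (2 : ℝ) ^ u := by
  obtain ⟨c, rfl⟩ : ∃ c, b = c + 1 := ⟨b - 1, by omega⟩
  have hWn : W ≤ n := by omega
  have hc : j + c + 1 < 2 ^ W := by
    have := Nat.le_pow_clog (b := 2) (by norm_num) (w + p + 2)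
    rw [← hW] at this
    omega
  simp only [Nat.add_sub_cancel]
  set T := t - 1
  unfold unifProb
  set E : Set ((Bits n → Bits n) × (Fin v → Bits u)) := {ω |
      advQ n ω.1 (nxt ω.2) T = branchE n u v W κ ω.1 ω.2 j a (c + 1) ∧
      ∀ t' < T, advQ n ω.1 (nxt ω.2) t' ≠ branchE n u v W κ ω.1 ω.2 j a c} with hE
  let F : E × Bits u → (Bits n → Bits n) × (Fin v → Bits u) := fun z =>
    (Function.update z.1.1.1 (branchE n u v W κ z.1.1.1 z.1.1.2 j a c)
      (setBits κ (z.1.1.1 (branchE n u v W κ z.1.1.1 z.1.1.2 j a c)) z.2), z.1.1.2)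
  have hF : Function.Injective F := by
    rintro ⟨⟨⟨R, X⟩, h1, h2⟩, s⟩ ⟨⟨⟨R', X'⟩, h1', h2'⟩, s'⟩ h
    simp only [F, Prod.mk.injEq] at h
    obtain ⟨hR, rfl⟩ := h
    simp only at h1 h2 h1' h2'
    have e1 := branchE_update (κ := κ) hWn R X j a c hc
      (setBits κ (R (branchE n u v W κ R X j a c)) s)
    have e2 := branchE_update (κ := κ) hWn R' X j a c hc
      (setBits κ (R' (branchE n u v W κ R' X j a c)) s')
    have q1 := advAns_update R (nxt X) _
      (setBits κ (R (branchE n u v W κ R X j a c)) s) T h2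
    have q2 := advAns_update R' (nxt X) _
      (setBits κ (R' (branchE n u v W κ R' X j a c)) s') T h2'
    rw [hR] at e1 q1
    have ee := e1.symm.trans e2
    have qq := q1.symm.trans q2
    have hq : advQ n R (nxt X) T = advQ n R' (nxt X) T := by simp only [advQ, qq]
    rw [h1, h1'] at hq
    have hy := lineStr_snd_inj hn1 hq
    rw [ee] at hR hy
    have hv := congrFun hR (branchE n u v W κ R' X j a c)
    simp only [Function.update_self] at hv
    obtain ⟨k1, k2⟩ := setBits_inj hn2 hv hy
    have : R = R' := by
      funext z
      by_cases hz : z = branchE n u v W κ R' X j a c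
      · rw [hz, k1]
      · have := congrFun hR z
        simpa [Function.update_of_ne hz] using this
    subst this
    subst k2
    rfl
  have hcard := Nat.card_le_card_of_injective F hF
  rw [Nat.card_prod, Nat.card_coe_set_eq, Nat.card_eq_fintype_card (α := Bits u),
    Nat.card_eq_fintype_card] at hcard
  have hb : Fintype.card (Bits u) = 2 ^ u := by simp [Bits]
  rw [hb] at hcard
  rw [div_le_div_iff₀ (by exact_mod_cast Fintype.card_pos) (by positivity), one_mul]
  exact_mod_cast hcard
end

section
/- In the SimLine setting, assume u ≥ ⌈log₂ q⌉ + ⌈log₂ v⌉ where q ≥ 1 and s ≥ 1 are integers. Let A₁ be any function mapping a pair (RO, X) to a string in {0,1}^s, and let A₂ be any function mapping a pair consisting of a string in {0,1}^s and an oracle RO : {0,1}^n → {0,1}^n to a list of q strings in {0,1}^n; write Q(RO, X) for the set of entries of A₂(A₁(RO, X), RO). Then for every integer a ≥ 0, every set of indices I ⊆ {a+1, …, min(a+v, w)}, and every integer α ≥ 1, the probability over uniformly random (RO, X) that |Q(RO, X) ∩ {s_j : j ∈ I}| ≥ α (as a set of n-bit strings) is at most 2^(−(α·(u − ⌈log₂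 q⌉ − ⌈log₂ v⌉) − s − 1)). -/
open Classical in
lemma count_aux (u v q α : ℕ) (P : Finset (Bits u)) (hP : P.card ≤ q) :
    (Finset.univ.filter (fun X : Fin v → Bits u =>
      α ≤ (Finset.univ.filter (fun i => X i ∈ P)).card)).card * (2 ^ u) ^ α
      ≤ (v * q) ^ α * (2 ^ u) ^ v := by
  have hsub : (Finset.univ.filter (fun X : Fin v → Bits u =>
      α ≤ (Finset.univ.filter (fun i => X i ∈ P)).card)) ⊆
      (Finset.powersetCard α (Finset.univ : Finset (Fin v))).biUnion
        (fun T => Fintype.piFinset (fun i => if i ∈ T then P else Finset.univ)) := by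
    intro X hX
    simp only [Finset.mem_filter, Finset.mem_univ, true_and] at hX
    obtain ⟨T, hT, hc⟩ := Finset.exists_subset_card_eq hX
    simp only [Finset.mem_biUnion, Finset.mem_powersetCard, Fintype.mem_piFinset]
    refine ⟨T, ⟨Finset.subset_univ _, hc⟩, fun i => ?_⟩
    by_cases hi : i ∈ T
    · have := hT hi
      simp only [Finset.mem_filter, Finset.mem_univ, true_and] at this
      simp [hi, this]
    · simp [hi]
  have h1 := (Finset.card_le_card hsub).trans Finset.card_biUnion_le
  have hT : ∀ T ∈ Finset.powersetCard α (Finset.univ : Finset (Fin v)),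
      (Fintype.piFinset (fun i => if i ∈ T then P else Finset.univ)).card * (2 ^ u) ^ α
        ≤ q ^ α * (2 ^ u) ^ v := by
    intro T hT
    rw [Finset.mem_powersetCard] at hT
    have e : ∀ i : Fin v, (if i ∈ T then P else Finset.univ).card
        = if i ∈ T then P.card else 2 ^ u := by
      intro i
      split_ifs <;> simp
    rw [Fintype.card_piFinset]
    simp only [e]
    rw [Finset.prod_ite]
    simp only [Finset.prod_const]
    have c1 : (Finset.univ.filter (fun i => i ∈ T)).card = α := by simp [hT.2]
    have c2 : (Finset.univ.filter (fun i => i ∉ T)).card + α = v := by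
      have := Finset.card_filter_add_card_filter_not (s := (Finset.univ : Finset (Fin v)))
        (fun i => i ∈ T)
      rw [c1, Finset.card_univ, Fintype.card_fin] at this
      omega
    rw [c1, mul_assoc, ← pow_add, c2]
    gcongr
  calc _ ≤ (∑ T ∈ Finset.powersetCard α (Finset.univ : Finset (Fin v)),
        (Fintype.piFinset (fun i => if i ∈ T then P else Finset.univ)).card) * (2 ^ u) ^ α := by
        gcongr
    _ ≤ ∑ T ∈ Finset.powersetCard α (Finset.univ : Finset (Fin v)), q ^ α * (2 ^ u) ^ v := by
        rw [Finset.sum_mul]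
        exact Finset.sum_le_sum hT
    _ = v.choose α * (q ^ α * (2 ^ u) ^ v) := by simp
    _ ≤ v ^ α * (q ^ α * (2 ^ u) ^ v) := by
        gcongr
        exact Nat.choose_le_pow v α
    _ = _ := by ring

/-- first `u` bits -/
def firstBits (n u : ℕ) (y : Bits n) : Bits u := fun j => bitAt y j

lemma firstBits_simStr (n u v : ℕ) (hn : 2 * u ≤ n) (X : Fin v → Bits u) (k : ℕ) (r : Bits u) :
    firstBits n u (simStr n u v X k r) = getX X (k % v) := by
  funext j
  have hj := j.2
  have : (j : ℕ) < n := by omega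
  simp [firstBits, bitAt, simStr, this]

open Classical in
lemma window_aux (n u v w q : ℕ) (hn : 2 * u ≤ n) (hv : 2 ≤ v)
    (RO : Bits n → Bits n) (X : Fin v → Bits u) (Q : Fin q → Bits n)
    (a : ℕ) (I : Finset ℕ) (hI : I ⊆ Finset.Icc (a + 1) (min (a + v) w)) :
    Set.ncard ({y : Bits n | ∃ t : Fin q, Q t = y} ∩
        {y : Bits n | ∃ j ∈ I, simS n u v RO X (j - 1) = y})
    ≤ (Finset.univ.filter (fun i => X i ∈
        Finset.univ.image (fun t => firstBits n u (Q t)))).card := by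
  have h1 : ({y : Bits n | ∃ t : Fin q, Q t = y} ∩
        {y : Bits n | ∃ j ∈ I, simS n u v RO X (j - 1) = y}) ⊆
      (((I.filter (fun j => ∃ t, Q t = simS n u v RO X (j - 1))).image
        (fun j => simS n u v RO X (j - 1)) : Finset (Bits n)) : Set (Bits n)) := by
    rintro y ⟨⟨t, ht⟩, j, hj, hy⟩
    simp only [Finset.coe_image, Finset.coe_filter, Set.mem_image, Set.mem_setOf_eq]
    exact ⟨j, ⟨hj, t, by rw [ht, hy]⟩, hy⟩
  have h2 := Set.ncard_le_ncard h1 (Finset.finite_toSet _)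
  rw [Set.ncard_coe_finset] at h2
  refine h2.trans (Finset.card_image_le.trans ?_)
  have hv0 : 0 < v := by omega
  refine Finset.card_le_card_of_injOn (fun j => ⟨(j - 1) % v, Nat.mod_lt _ hv0⟩) ?_ ?_
  · intro j hj
    simp only [Finset.coe_filter, Set.mem_setOf_eq] at hj
    obtain ⟨_, t, ht⟩ := hj
    simp only [Finset.coe_filter, Set.mem_setOf_eq, Finset.mem_univ, true_and, Finset.mem_image]
    refine ⟨t, ?_⟩
    rw [ht, simS, firstBits_simStr n u v hn, getX, dif_pos (Nat.mod_lt _ hv0)]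
  · intro i hi j hj hij
    simp only [Finset.coe_filter, Set.mem_setOf_eq] at hi hj
    have hi' := Finset.mem_Icc.1 (hI hi.1)
    have hj' := Finset.mem_Icc.1 (hI hj.1)
    simp only [Fin.mk.injEq] at hij
    have hiv : i ≤ a + v := hi'.2.trans (min_le_left _ _)
    have hjv : j ≤ a + v := hj'.2.trans (min_le_left _ _)
    have hm : (i - 1) ≡ (j - 1) [MOD v] := hij
    have : i - 1 = j - 1 := by
      rcases le_total i j with h | h
      · have h3 := (Nat.modEq_iff_dvd' (by omega)).1 hm
        have h4 := Nat.eq_zero_of_dvd_of_lt h3 (by omega)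
        omega
      · have h3 := (Nat.modEq_iff_dvd' (by omega)).1 hm.symm
        have h4 := Nat.eq_zero_of_dvd_of_lt h3 (by omega)
        omega
    omega

/-- **Lemma `smallint`.**
In the SimLine setting with `u ≥ ⌈log₂ q⌉ + ⌈log₂ v⌉`: `A₁` maps `(RO, X)` to an `s`-bit
state, `A₂` maps an `s`-bit state and an oracle to a list of `q` `n`-bit strings, and
`Q(RO,X)` is the set of entries of `A₂ (A₁ RO X) RO`.  For any window
`I ⊆ {a+1, …, min(a+v, w)}` and any `α ≥ 1`, the probability over uniformly random
`(RO, X)` that `|Q(RO,X) ∩ {s_j : j ∈ I}| ≥ α` is at most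
`2^(−(α(u − ⌈log₂ q⌉ − ⌈log₂ v⌉) − s − 1))`.
(Here `simS … (j-1)` is the paper's `s_j`.) -/
theorem stmt9 (n u v w s q : ℕ) (hu : 1 ≤ u) (hn : 2 * u ≤ n) (hv : 2 ≤ v) (hw : 2 ≤ w)
    (hs : 1 ≤ s) (hq : 1 ≤ q)
    (huq : Nat.clog 2 q + Nat.clog 2 v ≤ u)
    (A1 : (Bits n → Bits n) → (Fin v → Bits u) → Bits s)
    (A2 : Bits s → (Bits n → Bits n) → Fin q → Bits n)
    (a : ℕ) (I : Finset ℕ) (hI : I ⊆ Finset.Icc (a + 1) (min (a + v) w))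
    (α : ℕ) (hα : 1 ≤ α) :
    unifProb (fun ω : (Bits n → Bits n) × (Fin v → Bits u) =>
      α ≤ Set.ncard ({y : Bits n | ∃ t : Fin q, A2 (A1 ω.1 ω.2) ω.1 t = y} ∩
        {y : Bits n | ∃ j ∈ I, simS n u v ω.1 ω.2 (j - 1) = y})) ≤
    (2 : ℝ) ^ (-((α : ℤ) * ((u : ℤ) - (Nat.clog 2 q : ℤ) - (Nat.clog 2 v : ℤ))
      - (s : ℤ) - 1)) := by
  classical
  unfold unifProb
  set E : Finset ((Bits n → Bits n) × (Fin v → Bits u)) := Finset.univ.filter (fun ω =>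
      α ≤ Set.ncard ({y : Bits n | ∃ t : Fin q, A2 (A1 ω.1 ω.2) ω.1 t = y} ∩
        {y : Bits n | ∃ j ∈ I, simS n u v ω.1 ω.2 (j - 1) = y})) with hE
  have hEs : {ω : (Bits n → Bits n) × (Fin v → Bits u) |
      α ≤ Set.ncard ({y : Bits n | ∃ t : Fin q, A2 (A1 ω.1 ω.2) ω.1 t = y} ∩
        {y : Bits n | ∃ j ∈ I, simS n u v ω.1 ω.2 (j - 1) = y})} = (E : Set _) := by
    simp [hE]
  rw [hEs, Set.ncard_coe_finset]
  have hfib : ∀ p : (Bits n → Bits n) × Bits s,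
      (E.filter (fun ω => (ω.1, A1 ω.1 ω.2) = p)).card * (2 ^ u) ^ α
        ≤ (v * q) ^ α * (2 ^ u) ^ v := by
    rintro ⟨RO, σ⟩
    have hc := count_aux u v q α
      (Finset.univ.image (fun t => firstBits n u (A2 σ RO t)))
      (Finset.card_image_le.trans (by simp))
    refine le_trans (Nat.mul_le_mul_right _ ?_) hc
    refine Finset.card_le_card_of_injOn Prod.snd ?_ ?_
    · rintro ⟨R, X⟩ hω
      simp only [hE, Finset.coe_filter, Set.mem_setOf_eq, Finset.mem_filter, Finset.mem_univ,
        true_and, Prod.mk.injEq] at hω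
      obtain ⟨h1, rfl, rfl⟩ := hω
      simp only [Finset.coe_filter, Set.mem_setOf_eq, Finset.mem_univ, true_and]
      exact h1.trans (window_aux n u v w q hn hv R X _ a I hI)
    · rintro ⟨R, X⟩ hω ⟨R', X'⟩ hω' h
      simp only [Finset.coe_filter, Set.mem_setOf_eq, Prod.mk.injEq] at hω hω' h
      rw [Prod.mk.injEq]
      exact ⟨hω.2.1.trans hω'.2.1.symm, h⟩
  have hcard : E.card * (2 ^ u) ^ α ≤
      Fintype.card (Bits n → Bits n) * 2 ^ s * ((v * q) ^ α * (2 ^ u) ^ v) := by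
    rw [Finset.card_eq_sum_card_fiberwise (f := fun ω => (ω.1, A1 ω.1 ω.2))
      (t := Finset.univ) (by intro x _; simp), Finset.sum_mul]
    refine (Finset.sum_le_card_nsmul _ _ _ (fun p _ => hfib p)).trans ?_
    simp [Fintype.card_prod]
  have hcardΩ : Fintype.card ((Bits n → Bits n) × (Fin v → Bits u))
      = Fintype.card (Bits n → Bits n) * (2 ^ u) ^ v := by
    rw [Fintype.card_prod]
    congr 1
    simp
  rw [hcardΩ]
  set N := Fintype.card (Bits n → Bits n) with hN
  have hNpos : 0 < N := Fintype.card_pos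
  have hvq : (v * q) ^ α ≤ 2 ^ (α * (Nat.clog 2 q + Nat.clog 2 v)) := by
    rw [mul_comm α, pow_mul, pow_add, mul_comm v q]
    gcongr
    · exact Nat.le_pow_clog (by norm_num) q
    · exact Nat.le_pow_clog (by norm_num) v
  have hfin : E.card * (2 ^ u) ^ α ≤
      N * (2 ^ u) ^ v * 2 ^ (s + 1 + α * (Nat.clog 2 q + Nat.clog 2 v)) := by
    refine hcard.trans ?_
    calc N * 2 ^ s * ((v * q) ^ α * (2 ^ u) ^ v)
        ≤ N * 2 ^ (s + 1) *
          (2 ^ (α * (Nat.clog 2 q + Nat.clog 2 v)) * (2 ^ u) ^ v) := by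
          gcongr
          · norm_num
          · omega
      _ = _ := by ring
  have hfinR : (E.card : ℝ) * (2 ^ u) ^ α ≤
      N * (2 ^ u) ^ v * 2 ^ (s + 1 + α * (Nat.clog 2 q + Nat.clog 2 v)) := by
    exact_mod_cast hfin
  have hexp : (2 : ℝ) ^ (-((α : ℤ) * ((u : ℤ) - (Nat.clog 2 q : ℤ) - (Nat.clog 2 v : ℤ))
      - (s : ℤ) - 1))
      = 2 ^ (s + 1 + α * (Nat.clog 2 q + Nat.clog 2 v)) / (2 ^ u) ^ α := by
    rw [← pow_mul, ← zpow_natCast, ← zpow_natCast, ← zpow_sub₀ (by norm_num)]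
    congr 1
    push_cast
    ring
  have hNR : (0 : ℝ) < N := by exact_mod_cast hNpos
  rw [hexp, div_le_div_iff₀ (by push_cast; positivity) (by positivity)]
  push_cast
  linarith
end

section
/- In the setting of Lemma 'smallint' (SimLine setting, u ≥ ⌈log₂ q⌉ + ⌈log₂ v⌉, A₁ mapping (RO, X) to {0,1}^s, A₂ mapping an s-bit state and an oracle to a list of q strings in {0,1}^n, Q(RO, X) the resulting query set, a ≥ 0 an integer, I ⊆ {a+1,…,min(a+v,w)}, α ≥ 1 an integer): if the probability over uniformly random (RO, X) that |Q(RO, X) ∩ {s_j : j ∈ I}| ≥ α equals ε, then there exist a set F of pairs (RO, X) with |F| ≥ ε·2^(n·2^n + u·v) and an injective function Enc from F into binary strings such that |Enc(RO, X)| ≤ n·2^n + s + α·(⌈log₂ q⌉ + ⌈log₂ v⌉) + (v − α)·u for every (RO, X) ∈ F. -/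
theorem cover_exists (v α : ℕ) (i : Fin α → Fin v) (hi : Function.Injective i) :
    ∃ e : Fin (v - α) → Fin v, ∀ x, (∃ k, i k = x) ∨ (∃ k, e k = x) := by
  classical
  have hc : ((Finset.univ.image i)ᶜ).card = v - α := by
    rw [Finset.card_compl, Finset.card_image_of_injective _ hi]
    simp
  refine ⟨((Finset.univ.image i)ᶜ).orderEmbOfFin hc, fun x => ?_⟩
  by_cases hx : x ∈ Finset.univ.image i
  · left
    simpa using hx
  · right
    have h2 : x ∈ Set.range (((Finset.univ.image i)ᶜ).orderEmbOfFin hc) := by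
      rw [Finset.range_orderEmbOfFin]
      simpa using hx
    exact h2

theorem firstBits_simS (n u v : ℕ) (hn : 2 * u ≤ n) (hv : 0 < v) (RO : Bits n → Bits n)
    (X : Fin v → Bits u) (k : ℕ) :
    firstBits n u (simS n u v RO X k) = X ⟨k % v, Nat.mod_lt _ hv⟩ := by
  funext j
  have hj := j.2
  have hjn : (j : ℕ) < n := by omega
  simp [firstBits, simS, simStr, bitAt, getX, hjn, Nat.mod_lt _ hv]

theorem blocks_exist (n u v w q : ℕ) (hn : 2 * u ≤ n) (hv : 0 < v)
    (RO : Bits n → Bits n) (X : Fin v → Bits u) (B : Fin q → Bits n)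
    (a : ℕ) (I : Finset ℕ) (hI : I ⊆ Finset.Icc (a + 1) (min (a + v) w)) (α : ℕ)
    (h : α ≤ Set.ncard ({y : Bits n | ∃ t : Fin q, B t = y} ∩
        {y : Bits n | ∃ j ∈ I, simS n u v RO X (j - 1) = y})) :
    ∃ (t : Fin α → Fin q) (i : Fin α → Fin v), Function.Injective i ∧
      ∀ k, X (i k) = firstBits n u (B (t k)) := by
  classical
  obtain ⟨Y, hY, hYc⟩ := Set.exists_subset_card_eq h
  have hfin : Y.Finite := Set.toFinite Y
  have : Nat.card Y = α := hYc
  let e : Y ≃ Fin α := Finite.equivFinOfCardEq this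
  have key : ∀ k : Fin α, ∃ (t : Fin q) (j : ℕ), B t = (e.symm k).1 ∧ j ∈ I ∧
      simS n u v RO X (j - 1) = (e.symm k).1 := by
    intro k
    obtain ⟨⟨t, ht⟩, ⟨j, hj, hj'⟩⟩ := hY (e.symm k).2
    exact ⟨t, j, ht, hj, hj'⟩
  choose t j ht hj hs using key
  refine ⟨t, fun k => ⟨(j k - 1) % v, Nat.mod_lt _ hv⟩, ?_, ?_⟩
  · intro k l hkl
    have h1 : (j k - 1) % v = (j l - 1) % v := by simpa using hkl
    have hk := Finset.mem_Icc.1 (hI (hj k))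
    have hl := Finset.mem_Icc.1 (hI (hj l))
    have h2 : j k - 1 = j l - 1 := by
      have hk2 : j k ≤ a + v := le_trans hk.2 (min_le_left _ _)
      have hl2 : j l ≤ a + v := le_trans hl.2 (min_le_left _ _)
      have h3 : a + (j k - 1 - a) ≡ a + (j l - 1 - a) [MOD v] := by
        rw [Nat.add_sub_cancel' (by omega), Nat.add_sub_cancel' (by omega)]
        exact h1
      have h4 := Nat.ModEq.add_left_cancel' a h3
      have h5 := Nat.ModEq.eq_of_lt_of_lt h4 (by omega) (by omega)
      omega
    apply e.symm.injective
    apply Subtype.ext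
    rw [← hs k, ← hs l, h2]
  · intro k
    rw [ht k, ← hs k, firstBits_simS n u v hn hv]

/-- **Encoding claim inside Lemma `smallint`.**
In the setting of Lemma `smallint`, if the probability over uniformly random `(RO, X)`
that `|Q(RO,X) ∩ {s_j : j ∈ I}| ≥ α` equals `ε`, then there is a set `F` of pairs
`(RO, X)` with `|F| ≥ ε·2^(n·2^n + u·v)` and an injective encoding of `F` into binary
strings of length at most `n·2^n + s + α(⌈log₂ q⌉ + ⌈log₂ v⌉) + (v − α)·u`. -/
theorem stmt10 (n u v w s q : ℕ) (hu : 1 ≤ u) (hn : 2 * u ≤ n) (hv : 2 ≤ v) (hw : 2 ≤ w)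
    (hs : 1 ≤ s) (hq : 1 ≤ q)
    (huq : Nat.clog 2 q + Nat.clog 2 v ≤ u)
    (A1 : (Bits n → Bits n) → (Fin v → Bits u) → Bits s)
    (A2 : Bits s → (Bits n → Bits n) → Fin q → Bits n)
    (a : ℕ) (I : Finset ℕ) (hI : I ⊆ Finset.Icc (a + 1) (min (a + v) w))
    (α : ℕ) (hα : 1 ≤ α) (ε : ℝ)
    (hε : unifProb (fun ω : (Bits n → Bits n) × (Fin v → Bits u) =>
      α ≤ Set.ncard ({y : Bits n | ∃ t : Fin q, A2 (A1 ω.1 ω.2) ω.1 t = y} ∩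
        {y : Bits n | ∃ j ∈ I, simS n u v ω.1 ω.2 (j - 1) = y})) = ε) :
    ∃ (F : Set ((Bits n → Bits n) × (Fin v → Bits u)))
      (Enc : (Bits n → Bits n) × (Fin v → Bits u) → List Bool),
      ε * (2 : ℝ) ^ (n * 2 ^ n + u * v) ≤ (F.ncard : ℝ) ∧
      Set.InjOn Enc F ∧
      ∀ ω ∈ F, (Enc ω).length ≤
        n * 2 ^ n + s + α * (Nat.clog 2 q + Nat.clog 2 v) + (v - α) * u := by
  classical
  set F : Set ((Bits n → Bits n) × (Fin v → Bits u)) := {ω |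
      α ≤ Set.ncard ({y : Bits n | ∃ t : Fin q, A2 (A1 ω.1 ω.2) ω.1 t = y} ∩
        {y : Bits n | ∃ j ∈ I, simS n u v ω.1 ω.2 (j - 1) = y})} with hF
  have hcov : ∀ i : Fin α → Fin v, ∃ e : Fin (v - α) → Fin v,
      Function.Injective i → ∀ x, (∃ k, i k = x) ∨ (∃ k, e k = x) := by
    intro i
    by_cases hi : Function.Injective i
    · obtain ⟨e, he⟩ := cover_exists v α i hi
      exact ⟨e, fun _ => he⟩
    · exact ⟨fun _ => ⟨0, by omega⟩, fun h => absurd h hi⟩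
  choose g hg using hcov
  have hblk : ∀ ω : (Bits n → Bits n) × (Fin v → Bits u), ω ∈ F →
      ∃ p : Fin α → Fin q × Fin v, Function.Injective (fun k => (p k).2) ∧
      ∀ k, ω.2 (p k).2 = firstBits n u (A2 (A1 ω.1 ω.2) ω.1 (p k).1) := by
    intro ω hω
    obtain ⟨t, i, hi, h⟩ := blocks_exist n u v w q hn (by omega) ω.1 ω.2 _ a I hI α hω
    exact ⟨fun k => (t k, i k), hi, h⟩
  have : Nonempty (Fin α → Fin q × Fin v) := ⟨fun _ => (⟨0, by omega⟩, ⟨0, by omega⟩)⟩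
  choose! p hp1 hp2 using hblk
  let T := (Bits n → Bits n) × Bits s × (Fin α → Fin q × Fin v) × (Fin (v - α) → Bits u)
  let L := n * 2 ^ n + s + α * (Nat.clog 2 q + Nat.clog 2 v) + (v - α) * u
  have hT : Fintype.card T ≤ Fintype.card (Bits L) := by
    have h1 : q * v ≤ 2 ^ (Nat.clog 2 q + Nat.clog 2 v) := by
      rw [pow_add]
      exact Nat.mul_le_mul (Nat.le_pow_clog (by norm_num) q) (Nat.le_pow_clog (by norm_num) v)
    have h2 : (q * v) ^ α ≤ 2 ^ (α * (Nat.clog 2 q + Nat.clog 2 v)) := by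
      rw [mul_comm α, pow_mul]
      exact Nat.pow_le_pow_left h1 α
    have h3 : Fintype.card T =
        2 ^ (n * 2 ^ n) * (2 ^ s * ((q * v) ^ α * 2 ^ ((v - α) * u))) := by
      simp only [T, Bits, Fintype.card_prod, Fintype.card_pi, Fintype.card_bool,
        Finset.prod_const, Finset.card_univ, Fintype.card_fin, ← pow_mul, mul_comm u]
    have h4 : Fintype.card (Bits L) = 2 ^ (n * 2 ^ n) * (2 ^ s *
        (2 ^ (α * (Nat.clog 2 q + Nat.clog 2 v)) * 2 ^ ((v - α) * u))) := by
      simp only [Bits, Fintype.card_pi, Fintype.card_bool, Finset.prod_const, Finset.card_univ,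
        Fintype.card_fin, L, pow_add, mul_assoc]
    rw [h3, h4]
    gcongr
  obtain ⟨emb⟩ := Function.Embedding.nonempty_of_card_le hT
  let c : (Bits n → Bits n) × (Fin v → Bits u) → T := fun ω =>
    (ω.1, A1 ω.1 ω.2, p ω, fun k => ω.2 (g (fun k => (p ω k).2) k))
  refine ⟨F, fun ω => List.ofFn (emb (c ω)), ?_, ?_, ?_⟩
  · have hcard : (Fintype.card ((Bits n → Bits n) × (Fin v → Bits u)) : ℝ)
        = 2 ^ (n * 2 ^ n + u * v) := by
      simp [Bits, ← pow_mul, pow_add]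
    rw [← hε, unifProb, hcard, div_mul_cancel₀ _ (by positivity)]
  · intro ω hω ω' hω' h
    have hc : c ω = c ω' := emb.injective (List.ofFn_injective h)
    have hRO : ω.1 = ω'.1 := congrArg (fun z : T => z.1) hc
    have hA : A1 ω.1 ω.2 = A1 ω'.1 ω'.2 := congrArg (fun z : T => z.2.1) hc
    have hpp : p ω = p ω' := congrArg (fun z : T => z.2.2.1) hc
    have hrest : (fun k => ω.2 (g (fun k => (p ω k).2) k)) =
        (fun k => ω'.2 (g (fun k => (p ω' k).2) k)) := congrArg (fun z : T => z.2.2.2) hc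
    refine Prod.ext hRO ?_
    funext x
    rcases hg (fun k => (p ω k).2) (hp1 ω hω) x with ⟨k, hk⟩ | ⟨k, hk⟩
    · have e1 := hp2 ω hω k
      have e2 := hp2 ω' hω' k
      rw [← hpp, ← hA, ← hRO] at e2
      rw [← hk]
      exact e1.trans e2.symm
    · have e1 := congrFun hrest k
      rw [← hpp] at e1
      rw [← hk]
      exact e1
  · intro ω _
    simp [L]
end

section
/- In the SimLine setting, assume u ≥ ⌈log₂ q⌉ + ⌈log₂ v⌉. For every deterministic MPC algorithm with m machines, local memory s bits, and at most q oracle queries per machine per round, every machine i, every round k ≥ 0, every integer a ≥ 0, every set of indices I ⊆ {a+1, …, min(a+v, w)}, and every integer α ≥ 1, the probability over uniformly random (RO, X) that |Q_i^{(k)} ∩ {s_j : j ∈ I}| ≥ α is at most 2^(−(α·(u − ⌈log₂ q⌉ − ⌈log₂ v⌉) − s − 1)). -/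
/-- A deterministic MPC algorithm with `m` machines, local memory `s` bits, at most `q`
adaptive oracle queries (to an oracle on `n`-bit strings) per machine per round, on
inputs from `I`.  `init` splits the input into the machines' initial states, `qf k i` is
machine `i`'s next-query function in round `k` (from its state and the answers received
so far in the round), and `cf k i` produces the messages machine `i` sends to each
machine at the end of round `k`; each machine receives at most `s` bits per round. -/
structure MPC (n s q m : ℕ) (I : Type) where
  init : I → Fin m → Bits s
  qf : ℕ → Fin m → Bits s → List (Bits n) → Bits n
  cf : ℕ → Fin m → Bits s → List (Bits n) → Fin m → List Bool
  comm_le : ∀ (k : ℕ) (st : Fin m → Bits s) (ans : Fin m → List (Bits n)) (j : Fin m),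
    (∑ i : Fin m, (cf k i (st i) (ans i) j).length) ≤ s

/-- Pad/truncate a list of booleans to an `s`-bit state. -/
def listToBits (s : ℕ) (L : List Bool) : Bits s := fun b => L.getD (b : ℕ) false

/-- `mstate A RO X k i` : the state of machine `i` at the beginning of round `k` when the
MPC algorithm `A` is run with oracle `RO` on input `X`. -/
def mstate {n s q m : ℕ} {I : Type} (A : MPC n s q m I) (RO : Bits n → Bits n) (X : I) :
    ℕ → Fin m → Bits s
  | 0 => A.init X
  | k + 1 => fun j =>
      listToBits s ((List.ofFn (fun i : Fin m =>
        A.cf k i (mstate A RO X k i)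
          (advAns n RO (A.qf k i (mstate A RO X k i)) q) j)).flatten)

/-- The `(t+1)`-st oracle query of machine `i` in round `k` of the run of `A` with
oracle `RO` on input `X`. -/
def mquery {n s q m : ℕ} {I : Type} (A : MPC n s q m I) (RO : Bits n → Bits n) (X : I)
    (k : ℕ) (i : Fin m) (t : ℕ) : Bits n :=
  advQ n RO (A.qf k i (mstate A RO X k i)) t

/-- Number of inputs with `α` prescribed distinct blocks. -/
lemma card_prescribed {v α : ℕ} {B : Type} [Fintype B] [DecidableEq B]
    (h : Fin α → Fin v) (hh : Function.Injective h) (c : Fin α → B) :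
    (Finset.univ.filter (fun X : Fin v → B => ∀ l, X (h l) = c l)).card
      * (Fintype.card B) ^ α ≤ (Fintype.card B) ^ v := by
  classical
  -- the map (X, y) ↦ X with the prescribed blocks overwritten by y is injective
  have key : ((Finset.univ.filter (fun X : Fin v → B => ∀ l, X (h l) = c l)) ×ˢ
      (Finset.univ : Finset (Fin α → B))).card ≤ (Finset.univ : Finset (Fin v → B)).card := by
    apply Finset.card_le_card_of_injOn
      (fun p => fun i => Function.extend h p.2 p.1 i)
    · intro p _
      simp
    · rintro ⟨X, y⟩ hX ⟨X', y'⟩ hX' heq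
      simp only [Finset.coe_product, Set.mem_prod, Finset.mem_coe, Finset.mem_filter,
        Finset.mem_univ, true_and, and_true] at hX hX'
      have e : ∀ i, Function.extend h y X i = Function.extend h y' X' i := fun i =>
        congrFun heq i
      have hy : y = y' := by
        funext l
        have := e (h l)
        rwa [hh.extend_apply, hh.extend_apply] at this
      have hXX : X = X' := by
        funext i
        by_cases hi : ∃ l, h l = i
        · obtain ⟨l, rfl⟩ := hi
          rw [hX l, hX' l]
        · have := e i
          rwa [Function.extend_apply' _ _ _ hi, Function.extend_apply' _ _ _ hi] at this
      rw [hy, hXX]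
  simpa [Finset.card_product] using key

/-- From the event we can read off `α` distinct blocks of the input from the queries. -/
lemma event_extract (n u v w q : ℕ) (hn : 2 * u ≤ n) (hv : 2 ≤ v)
    (RO : Bits n → Bits n) (X : Fin v → Bits u) (Q : ℕ → Bits n)
    (a : ℕ) (I : Finset ℕ) (hI : I ⊆ Finset.Icc (a + 1) (min (a + v) w)) (α : ℕ)
    (hE : α ≤ Set.ncard ({y : Bits n | ∃ t < q, Q t = y} ∩
        {y : Bits n | ∃ j ∈ I, simS n u v RO X (j - 1) = y})) :
    ∃ (g : Fin α → Fin q) (h : Fin α → Fin v), Function.Injective h ∧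
      ∀ l, X (h l) = fun b : Fin u => bitAt (Q (g l)) (b : ℕ) := by
  classical
  obtain ⟨T, hTS, hT⟩ := Set.exists_subset_card_eq hE
  have hfin : T.Finite := Set.toFinite T
  have hcard : Nat.card T = α := by rw [Nat.card_coe_set_eq]; exact hT
  obtain ⟨e⟩ : Nonempty (Fin α ≃ T) := ⟨(Finite.equivFinOfCardEq hcard).symm⟩
  have h1 : ∀ l, ∃ t < q, Q t = (e l : Bits n) := fun l => (hTS (e l).2).1
  have h2 : ∀ l, ∃ j ∈ I, simS n u v RO X (j - 1) = (e l : Bits n) := fun l => (hTS (e l).2).2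
  choose t ht hQ using h1
  choose j hj hS using h2
  have hjb : ∀ l, a + 1 ≤ j l ∧ j l ≤ a + v := by
    intro l
    have := Finset.mem_Icc.1 (hI (hj l))
    exact ⟨this.1, this.2.trans (min_le_left _ _)⟩
  refine ⟨fun l => ⟨t l, ht l⟩, fun l => ⟨(j l - 1) % v, Nat.mod_lt _ (by omega)⟩, ?_, ?_⟩
  · intro l l' hll
    have hm : (j l - 1) % v = (j l' - 1) % v := by simpa using hll
    have hjj : j l = j l' := by
      have b1 := hjb l
      have b2 := hjb l'
      have d1 := Nat.div_add_mod (j l - 1) v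
      have d2 := Nat.div_add_mod (j l' - 1) v
      rw [hm] at d1
      have : (j l - 1) / v = (j l' - 1) / v := by
        rcases lt_trichotomy ((j l - 1) / v) ((j l' - 1) / v) with c | c | c
        · have := Nat.mul_le_mul_left v (Nat.succ_le_of_lt c)
          rw [Nat.mul_succ] at this
          omega
        · exact c
        · have := Nat.mul_le_mul_left v (Nat.succ_le_of_lt c)
          rw [Nat.mul_succ] at this
          omega
      rw [this] at d1
      omega
    apply e.injective
    apply Subtype.ext
    rw [← hS l, ← hS l', hjj]
  · intro l
    funext b
    have hb := b.2
    have hbn : (b : ℕ) < n := by omega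
    have hlt : (j l - 1) % v < v := Nat.mod_lt _ (by omega)
    simp only [hQ, ← hS l]
    simp [bitAt, hbn, simS, simStr, getX, hlt]

/-- **Lemma `mrsmallint` (Lemma A.3).**
In the SimLine setting with `u ≥ ⌈log₂ q⌉ + ⌈log₂ v⌉`, for any deterministic MPC
algorithm (`m` machines, `s`-bit local memory, at most `q` queries per machine per
round), any machine `i`, round `k`, window `I ⊆ {a+1, …, min(a+v, w)}` and `α ≥ 1`, the
probability over uniformly random `(RO, X)` that machine `i`'s round-`k` queries hit at
least `α` of the SimLine entries `{s_j : j ∈ I}` is at most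
`2^(−(α(u − ⌈log₂ q⌉ − ⌈log₂ v⌉) − s − 1))`. -/
theorem stmt11 (n u v w s q m : ℕ) (hu : 1 ≤ u) (hn : 2 * u ≤ n) (hv : 2 ≤ v)
    (hw : 2 ≤ w) (hs : 1 ≤ s) (hq : 1 ≤ q) (hm : 1 ≤ m)
    (huq : Nat.clog 2 q + Nat.clog 2 v ≤ u)
    (A : MPC n s q m (Fin v → Bits u)) (i : Fin m) (k : ℕ)
    (a : ℕ) (I : Finset ℕ) (hI : I ⊆ Finset.Icc (a + 1) (min (a + v) w))
    (α : ℕ) (hα : 1 ≤ α) :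
    unifProb (fun ω : (Bits n → Bits n) × (Fin v → Bits u) =>
      α ≤ Set.ncard ({y : Bits n | ∃ t < q, mquery A ω.1 ω.2 k i t = y} ∩
        {y : Bits n | ∃ j ∈ I, simS n u v ω.1 ω.2 (j - 1) = y})) ≤
    (2 : ℝ) ^ (-((α : ℤ) * ((u : ℤ) - (Nat.clog 2 q : ℤ) - (Nat.clog 2 v : ℤ))
      - (s : ℤ) - 1)) := by
  classical
  set B : ℕ := 2 ^ u with hB
  have hcB : Fintype.card (Bits u) = B := by simp [hB]
  have hBpos : 0 < B := by positivity
  set P : (Bits n → Bits n) × (Fin v → Bits u) → Prop := fun ω =>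
      α ≤ Set.ncard ({y : Bits n | ∃ t < q, mquery A ω.1 ω.2 k i t = y} ∩
        {y : Bits n | ∃ j ∈ I, simS n u v ω.1 ω.2 (j - 1) = y}) with hP
  clear_value P
  -- bound for a fixed oracle
  have fixed : ∀ RO : Bits n → Bits n,
      (Finset.univ.filter (fun X : Fin v → Bits u => P (RO, X))).card * B ^ α
        ≤ 2 ^ s * (q ^ α * v ^ α) * B ^ v := by
    intro RO
    let D := Bits s × (Fin α → Fin q) × (Fin α → Fin v)
    let F : D → Finset (Fin v → Bits u) := fun d =>
      Finset.univ.filter (fun X : Fin v → Bits u => Function.Injective d.2.2 ∧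
        ∀ l, X (d.2.2 l) = fun b : Fin u => bitAt (advQ n RO (A.qf k i d.1) (d.2.1 l)) (b : ℕ))
    have hsub : Finset.univ.filter (fun X : Fin v → Bits u => P (RO, X)) ⊆
        (Finset.univ : Finset D).biUnion F := by
      intro X hX
      have hX' : P (RO, X) := (Finset.mem_filter.1 hX).2
      rw [hP] at hX'
      obtain ⟨g, h, hh, hg⟩ := event_extract n u v w q hn hv RO X
        (fun t => mquery A RO X k i t) a I hI α hX'
      refine Finset.mem_biUnion.2 ⟨(mstate A RO X k i, g, h), Finset.mem_univ _, ?_⟩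
      exact Finset.mem_filter.2 ⟨Finset.mem_univ _, hh, hg⟩
    have hF : ∀ d : D, (F d).card * B ^ α ≤ B ^ v := by
      intro d
      by_cases hd : Function.Injective d.2.2
      · have := card_prescribed d.2.2 hd
          (fun l => (fun b : Fin u => bitAt (advQ n RO (A.qf k i d.1) (d.2.1 l)) (b : ℕ) : Bits u))
        rw [hcB] at this
        simpa [F, hd] using this
      · simp [F, hd]
    calc _ ≤ (∑ d : D, (F d).card) * B ^ α :=
          Nat.mul_le_mul_right _ ((Finset.card_le_card hsub).trans Finset.card_biUnion_le)
      _ = ∑ d : D, (F d).card * B ^ α := by rw [Finset.sum_mul]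
      _ ≤ ∑ _d : D, B ^ v := Finset.sum_le_sum (fun d _ => hF d)
      _ = 2 ^ s * (q ^ α * v ^ α) * B ^ v := by
          simp [D, Finset.sum_const, Fintype.card_prod]
  -- sum over oracles
  have total : Set.ncard {ω | P ω} * B ^ α
      ≤ Fintype.card (Bits n → Bits n) * (2 ^ s * (q ^ α * v ^ α) * B ^ v) := by
    have e1 : Set.ncard {ω | P ω} =
        ∑ RO : Bits n → Bits n,
          (Finset.univ.filter (fun X : Fin v → Bits u => P (RO, X))).card := by
      rw [Set.ncard_eq_toFinset_card', Set.toFinset_ofPred, Finset.card_filter,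
        Fintype.sum_prod_type]
      simp only [Finset.card_filter]
    rw [e1, Finset.sum_mul]
    refine (Finset.sum_le_sum (fun RO _ => fixed RO)).trans ?_
    rw [Finset.sum_const, smul_eq_mul, Finset.card_univ]
  have hqv : q ^ α * v ^ α ≤ 2 ^ (α * (Nat.clog 2 q + Nat.clog 2 v)) := by
    rw [mul_comm α, pow_mul, pow_add, mul_pow]
    exact Nat.mul_le_mul (Nat.pow_le_pow_left (Nat.le_pow_clog (by norm_num) _) _)
      (Nat.pow_le_pow_left (Nat.le_pow_clog (by norm_num) _) _)
  have hΩ : Fintype.card ((Bits n → Bits n) × (Fin v → Bits u))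
      = Fintype.card (Bits n → Bits n) * B ^ v := by
    rw [Fintype.card_prod, Fintype.card_fun (α := Fin v), hcB, Fintype.card_fin]
  have hN : 0 < Fintype.card (Bits n → Bits n) := Fintype.card_pos
  have total2 : Set.ncard {ω | P ω} * 2 ^ (u * α) ≤
      2 ^ (s + α * (Nat.clog 2 q + Nat.clog 2 v)) *
        Fintype.card ((Bits n → Bits n) × (Fin v → Bits u)) := by
    rw [hΩ, pow_mul, ← hB, pow_add]
    calc _ ≤ _ := total
      _ = (2 ^ s * (q ^ α * v ^ α)) * (Fintype.card (Bits n → Bits n) * B ^ v) := by ring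
      _ ≤ _ := Nat.mul_le_mul_right _ (Nat.mul_le_mul_left _ hqv)
  have hΩpos : (0 : ℝ) < (Fintype.card ((Bits n → Bits n) × (Fin v → Bits u)) : ℝ) := by
    rw [hΩ]
    exact_mod_cast Nat.mul_pos hN (pow_pos hBpos _)
  have total3 : (Set.ncard {ω | P ω} : ℝ) * 2 ^ (u * α) ≤
      2 ^ (s + α * (Nat.clog 2 q + Nat.clog 2 v)) *
        (Fintype.card ((Bits n → Bits n) × (Fin v → Bits u)) : ℝ) := by
    exact_mod_cast total2
  have step : unifProb P ≤ (2 : ℝ) ^ (((s + α * (Nat.clog 2 q + Nat.clog 2 v) : ℕ) : ℤ)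
      - ((u * α : ℕ) : ℤ)) := by
    unfold unifProb
    rw [zpow_sub₀ (by norm_num), zpow_natCast, zpow_natCast, div_le_div_iff₀ hΩpos (by positivity)]
    exact total3
  refine step.trans (zpow_le_zpow_right₀ (by norm_num) ?_)
  push_cast
  linarith
end

section
/- There is an absolute constant K such that the following holds in the SimLine setting. Assume u > log₂ q + log₂ v, let h := s/(u − log₂ q − log₂ v) + 1 (a real number), and assume h ≤ v. For every deterministic MPC algorithm with m machines, local memory s bits, and at most q oracle queries per machine per round, and every integer R with 1 ≤ R ≤ w/h − 1, the probability over uniformly random (RO, X) that some machine queries the final SimLine string s_w during the first R rounds (i.e., s_w ∈ Q^{(≤R−1)}) is at most K·R·(m·2^(−(u − log₂ q − log₂ v)) + w·m·q·2^(−u) + w²·2^(−u)). In particular, this is the content of Lemma A.1: for the parameter setting w = T, u = n/3, v = S/u, s ≤ S/c (c a sufficiently large universal constant), with n ≤ S ≤ T ≤ 2^(n^{1/4}), m ≤ 2^(n^{1/4}) and q ≤ 2^(n/4), any deterministic MPC algorithm that computes SimLine^RO_{n,w,u,v} with probability at least 1/3 over uniform (RO, X) must run for at least w/h = Ω(T/s)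 rounds. -/
section Helpers

lemma unifProb_eq {Ω : Type} [Fintype Ω] (P : Ω → Prop) [DecidablePred P] :
    unifProb P = ((Finset.univ.filter P).card : ℝ) / (Fintype.card Ω : ℝ) := by
  unfold unifProb
  congr 2
  rw [← Set.ncard_coe_finset]
  congr 1
  ext ω
  simp

lemma unifProb_mono {Ω : Type} [Fintype Ω] {P Q : Ω → Prop} (h : ∀ ω, P ω → Q ω) :
    unifProb P ≤ unifProb Q := by
  classical
  rw [unifProb_eq, unifProb_eq]
  gcongr
  exact h _

lemma unifProb_or {Ω : Type} [Fintype Ω] (P Q : Ω → Prop) :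
    unifProb (fun ω => P ω ∨ Q ω) ≤ unifProb P + unifProb Q := by
  classical
  rw [unifProb_eq, unifProb_eq, unifProb_eq, ← add_div]
  gcongr
  rw [Finset.filter_or]
  exact_mod_cast Finset.card_union_le _ _

lemma unifProb_exists {Ω ι : Type} [Fintype Ω] [Fintype ι] (P : ι → Ω → Prop) :
    unifProb (fun ω => ∃ i, P i ω) ≤ ∑ i, unifProb (P i) := by
  classical
  simp only [unifProb_eq]
  rw [← Finset.sum_div]
  gcongr
  have : (Finset.univ.filter (fun ω => ∃ i, P i ω)) =
      Finset.univ.biUnion (fun i => Finset.univ.filter (P i)) := by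
    ext ω; simp
  rw [this]
  exact_mod_cast Finset.card_biUnion_le

lemma unifProb_exists_le {Ω ι : Type} [Fintype Ω] [Fintype ι] (P : ι → Ω → Prop) (c : ℝ)
    (h : ∀ i, unifProb (P i) ≤ c) :
    unifProb (fun ω => ∃ i, P i ω) ≤ (Fintype.card ι : ℝ) * c := by
  refine (unifProb_exists P).trans ?_
  refine (Finset.sum_le_sum (fun i _ => h i)).trans ?_
  simp

lemma unifProb_prod_right {Ω₁ Ω₂ : Type} [Fintype Ω₁] [Fintype Ω₂] [Nonempty Ω₁] [Nonempty Ω₂]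
    (P : Ω₁ × Ω₂ → Prop) (c : ℝ)
    (h : ∀ x, unifProb (fun y => P (y, x)) ≤ c) : unifProb P ≤ c := by
  classical
  have h1 : (0 : ℝ) < Fintype.card Ω₁ := by exact_mod_cast Fintype.card_pos
  have h2 : (0 : ℝ) < Fintype.card Ω₂ := by exact_mod_cast Fintype.card_pos
  simp only [unifProb_eq] at h ⊢
  rw [Fintype.card_prod, div_le_iff₀ (by push_cast; positivity)]
  have e : (((Finset.univ.filter P).card : ℕ) : ℝ) =
      ∑ x : Ω₂, (((Finset.univ.filter (fun y => P (y, x))).card : ℕ) : ℝ) := by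
    simp only [Finset.card_filter]
    rw [Fintype.sum_prod_type_right]
    push_cast
    rfl
  rw [e]
  calc _ ≤ ∑ x : Ω₂, c * (Fintype.card Ω₁ : ℝ) := by
        refine Finset.sum_le_sum (fun x _ => ?_)
        have := h x
        rwa [div_le_iff₀ h1] at this
    _ = _ := by simp; ring

lemma unifProb_prod_left {Ω₁ Ω₂ : Type} [Fintype Ω₁] [Fintype Ω₂] [Nonempty Ω₁] [Nonempty Ω₂]
    (P : Ω₁ × Ω₂ → Prop) (c : ℝ)
    (h : ∀ y, unifProb (fun x => P (y, x)) ≤ c) : unifProb P ≤ c := by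
  classical
  have h1 : (0 : ℝ) < Fintype.card Ω₁ := by exact_mod_cast Fintype.card_pos
  have h2 : (0 : ℝ) < Fintype.card Ω₂ := by exact_mod_cast Fintype.card_pos
  simp only [unifProb_eq] at h ⊢
  rw [Fintype.card_prod, div_le_iff₀ (by push_cast; positivity)]
  have e : (((Finset.univ.filter P).card : ℕ) : ℝ) =
      ∑ y : Ω₁, (((Finset.univ.filter (fun x => P (y, x))).card : ℕ) : ℝ) := by
    simp only [Finset.card_filter]
    rw [Fintype.sum_prod_type]
    push_cast
    rfl
  rw [e]
  calc _ ≤ ∑ x : Ω₁, c * (Fintype.card Ω₂ : ℝ) := by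
        refine Finset.sum_le_sum (fun x _ => ?_)
        have := h x
        rwa [div_le_iff₀ h2] at this
    _ = _ := by simp; ring

/-- First block of a query string. -/
def fstB (n u : ℕ) (y : Bits n) : Bits u := fun j => bitAt y (j : ℕ)
/-- Second block of a query string. -/
def sndB (n u : ℕ) (y : Bits n) : Bits u := fun j => bitAt y (u + (j : ℕ))
/-- Replace the first block. -/
def repB {n u : ℕ} (z : Bits u) (y : Bits n) : Bits n := fun j =>
  if h : (j : ℕ) < u then z ⟨j, h⟩ else y j

lemma fstB_simStr {n u v : ℕ} (hn : 2 * u ≤ n) (X : Fin v → Bits u) (k : ℕ) (r : Bits u) :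
    fstB n u (simStr n u v X k r) = getX X (k % v) := by
  funext j
  have hj := j.2
  have h1 : (j : ℕ) < n := by omega
  simp [fstB, bitAt, simStr, h1]

lemma sndB_simStr {n u v : ℕ} (hn : 2 * u ≤ n) (X : Fin v → Bits u) (k : ℕ) (r : Bits u) :
    sndB n u (simStr n u v X k r) = r := by
  funext j
  have hj := j.2
  have h1 : u + (j : ℕ) < n := by omega
  have h2 : u + (j : ℕ) < 2 * u := by omega
  simp [sndB, bitAt, simStr, h1, h2]

lemma fstB_repB {n u : ℕ} (hn : u ≤ n) (z : Bits u) (y : Bits n) :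
    fstB n u (repB z y) = z := by
  funext j
  have hj := j.2
  have h1 : (j : ℕ) < n := by omega
  simp [fstB, bitAt, repB, h1]

lemma repB_repB {n u : ℕ} (z z' : Bits u) (y : Bits n) :
    repB z (repB z' y) = repB z y := by
  funext j
  unfold repB
  split_ifs <;> rfl

lemma repB_fstB {n u : ℕ} (y : Bits n) :
    repB (fstB n u y) y = y := by
  funext j
  simp [repB, fstB, bitAt]

lemma resample {n u : ℕ} (hn : u ≤ n) (G : (Bits n → Bits n) → Prop)
    (p : (Bits n → Bits n) → Bits n) (c : (Bits n → Bits n) → Bits u)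
    (hG : ∀ RO e, G RO → p (Function.update RO (p RO) e) = p RO ∧
      c (Function.update RO (p RO) e) = c RO) :
    unifProb (fun RO => G RO ∧ fstB n u (RO (p RO)) = c RO) ≤ ((2 : ℝ) ^ u)⁻¹ := by
  classical
  let f : {RO // G RO ∧ fstB n u (RO (p RO)) = c RO} × Bits u → (Bits n → Bits n) :=
    fun a => Function.update a.1.1 (p a.1.1) (repB a.2 (a.1.1 (p a.1.1)))
  have hf : Function.Injective f := by
    rintro ⟨⟨R1, g1, e1⟩, z1⟩ ⟨⟨R2, g2, e2⟩, z2⟩ h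
    have a1 := hG R1 (repB z1 (R1 (p R1))) g1
    have a2 := hG R2 (repB z2 (R2 (p R2))) g2
    simp only [f] at h
    rw [h] at a1
    have hp : p R1 = p R2 := a1.1.symm.trans a2.1
    have hc : c R1 = c R2 := a1.2.symm.trans a2.2
    have hx := congrFun h (p R1)
    rw [Function.update_self] at hx
    rw [hp, Function.update_self] at hx
    have hz : z1 = z2 := by
      have := congrArg (fstB n u) hx
      rwa [fstB_repB hn, fstB_repB hn] at this
    subst hz
    have hR : R1 = R2 := by
      funext y
      by_cases hy : y = p R2
      · subst hy
        have := congrArg (repB (c R1)) hx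
        rw [repB_repB, repB_repB] at this
        rw [← hp] at this ⊢
        nth_rewrite 1 [← e1] at this
        rw [repB_fstB, hc, ← e2, hp, repB_fstB] at this
        rw [hp]
        exact this
      · have := congrFun h y
        rwa [Function.update_of_ne (by rwa [hp]), Function.update_of_ne hy] at this
    subst hR
    rfl
  have hcard := Fintype.card_le_of_injective f hf
  rw [Fintype.card_prod, Fintype.card_subtype] at hcard
  have hb : Fintype.card (Bits u) = 2 ^ u := by simp [Bits]
  rw [hb] at hcard
  rw [unifProb_eq, div_le_iff₀ (by exact_mod_cast Fintype.card_pos), inv_mul_eq_div,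
    le_div_iff₀ (by positivity)]
  exact_mod_cast hcard

lemma simR_congr {n u v : ℕ} {RO RO' : Bits n → Bits n} {X : Fin v → Bits u} {j : ℕ}
    (h : ∀ l < j, RO' (simS n u v RO X l) = RO (simS n u v RO X l)) :
    ∀ l ≤ j, simR n u v RO' X l = simR n u v RO X l := by
  intro l
  induction l with
  | zero => intro _; rfl
  | succ l ih =>
    intro hl
    have := ih (by omega)
    have h2 := h l (by omega)
    unfold simS at h2
    simp only [simR, this, h2]

lemma simS_congr {n u v : ℕ} {RO RO' : Bits n → Bits n} {X : Fin v → Bits u} {j : ℕ}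
    (h : ∀ l < j, RO' (simS n u v RO X l) = RO (simS n u v RO X l)) :
    simS n u v RO' X j = simS n u v RO X j := by
  unfold simS
  rw [simR_congr h j le_rfl]

lemma advAns_congr {n : ℕ} {RO RO' : Bits n → Bits n} {f : List (Bits n) → Bits n} {t : ℕ}
    (h : ∀ t' < t, RO' (advQ n RO f t') = RO (advQ n RO f t')) :
    advAns n RO' f t = advAns n RO f t := by
  induction t with
  | zero => rfl
  | succ t ih =>
    have h1 := ih (fun t' ht => h t' (by omega))
    have h2 := h t (by omega)
    unfold advQ at h2
    simp only [advAns, h1, h2]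

lemma mstate_congr {n s q m : ℕ} {I : Type} (A : MPC n s q m I) {RO RO' : Bits n → Bits n} {X : I}
    {k : ℕ} (h : ∀ k' < k, ∀ i, ∀ t < q, RO' (mquery A RO X k' i t) = RO (mquery A RO X k' i t)) :
    mstate A RO' X k = mstate A RO X k := by
  induction k with
  | zero => rfl
  | succ k ih =>
    have h1 := ih (fun k' hk => h k' (by omega))
    have h2 : ∀ i, advAns n RO' (A.qf k i (mstate A RO X k i)) q =
        advAns n RO (A.qf k i (mstate A RO X k i)) q := fun i =>
      advAns_congr (fun t ht => h k (by omega) i t ht)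
    simp only [mstate, h1, h2]

lemma mquery_congr {n s q m : ℕ} {I : Type} (A : MPC n s q m I) {RO RO' : Bits n → Bits n} {X : I}
    {k : ℕ} {i : Fin m} {t : ℕ}
    (h : ∀ k' < k, ∀ i, ∀ t < q, RO' (mquery A RO X k' i t) = RO (mquery A RO X k' i t))
    (h' : ∀ t' < t, RO' (mquery A RO X k i t') = RO (mquery A RO X k i t')) :
    mquery A RO' X k i t = mquery A RO X k i t := by
  unfold mquery
  rw [mstate_congr A h]
  unfold advQ
  rw [advAns_congr h']

lemma simR_succ {n u v : ℕ} (RO : Bits n → Bits n) (X : Fin v → Bits u) (j : ℕ) :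
    simR n u v RO X (j + 1) = fstB n u (RO (simS n u v RO X j)) := rfl

/-- Collision event. -/
def evC (n u v : ℕ) (j l : ℕ) (ω : (Bits n → Bits n) × (Fin v → Bits u)) : Prop :=
  (l ≤ j ∧ ∀ l' < j, simS n u v ω.1 ω.2 l' ≠ simS n u v ω.1 ω.2 j) ∧
    simS n u v ω.1 ω.2 (j + 1) = simS n u v ω.1 ω.2 l

/-- Guessing event. -/
def evB {n u v s q m : ℕ} (A : MPC n s q m (Fin v → Bits u)) (k : ℕ) (i : Fin m) (t j : ℕ)
    (ω : (Bits n → Bits n) × (Fin v → Bits u)) : Prop :=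
  ((∀ l' < j, simS n u v ω.1 ω.2 l' ≠ simS n u v ω.1 ω.2 j) ∧
    (∀ k' < k, ∀ i', ∀ t' < q, mquery A ω.1 ω.2 k' i' t' ≠ simS n u v ω.1 ω.2 j) ∧
    (∀ t' < t, mquery A ω.1 ω.2 k i t' ≠ simS n u v ω.1 ω.2 j)) ∧
    mquery A ω.1 ω.2 k i t = simS n u v ω.1 ω.2 (j + 1)

/-- Many-blocks event. -/
def evA {n u v s q m : ℕ} (A : MPC n s q m (Fin v → Bits u)) (a : ℕ) (k : ℕ) (i : Fin m)
    (ω : (Bits n → Bits n) × (Fin v → Bits u)) : Prop :=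
  ∃ T : Finset (Fin v), T.card = a ∧
    ∀ b ∈ T, ∃ t : Fin q, fstB n u (mquery A ω.1 ω.2 k i t) = ω.2 b

lemma evC_le {n u v : ℕ} (hn : 2 * u ≤ n) (j l : ℕ) :
    unifProb (evC n u v j l) ≤ ((2 : ℝ) ^ u)⁻¹ := by
  apply unifProb_prod_right
  intro X
  refine le_trans (unifProb_mono ?_) (resample (u := u) (by omega)
    (fun RO => l ≤ j ∧ ∀ l' < j, simS n u v RO X l' ≠ simS n u v RO X j)
    (fun RO => simS n u v RO X j) (fun RO => simR n u v RO X l) ?_)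
  · rintro RO ⟨hg, he⟩
    refine ⟨hg, ?_⟩
    have := congrArg (sndB n u) he
    unfold simS at this
    rw [sndB_simStr hn, sndB_simStr hn, simR_succ] at this
    exact this
  · rintro RO e ⟨hl, hd⟩
    have H : ∀ l < j, (Function.update RO (simS n u v RO X j) e) (simS n u v RO X l)
        = RO (simS n u v RO X l) := fun l hl => Function.update_of_ne (hd l hl) _ _
    exact ⟨simS_congr H, simR_congr H l hl⟩

lemma evB_le {n u v s q m : ℕ} (hn : 2 * u ≤ n) (A : MPC n s q m (Fin v → Bits u))
    (k : ℕ) (i : Fin m) (t j : ℕ) :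
    unifProb (evB A k i t j) ≤ ((2 : ℝ) ^ u)⁻¹ := by
  apply unifProb_prod_right
  intro X
  refine le_trans (unifProb_mono ?_) (resample (u := u) (by omega)
    (fun RO => (∀ l' < j, simS n u v RO X l' ≠ simS n u v RO X j) ∧
    (∀ k' < k, ∀ i', ∀ t' < q, mquery A RO X k' i' t' ≠ simS n u v RO X j) ∧
    (∀ t' < t, mquery A RO X k i t' ≠ simS n u v RO X j))
    (fun RO => simS n u v RO X j) (fun RO => sndB n u (mquery A RO X k i t)) ?_)
  · rintro RO ⟨hg, he⟩
    refine ⟨hg, ?_⟩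
    simp only at he
    rw [he]
    unfold simS
    rw [sndB_simStr hn, simR_succ]
    rfl
  · rintro RO e ⟨hd, h1, h2⟩
    refine ⟨simS_congr fun l hl => Function.update_of_ne (hd l hl) _ _, ?_⟩
    congr 1
    exact mquery_congr A (fun k' hk i' t' ht => Function.update_of_ne (h1 k' hk i' t' ht) _ _)
      (fun t' ht => Function.update_of_ne (h2 t' ht) _ _)

lemma evA_le {n u v s q m : ℕ} (A : MPC n s q m (Fin v → Bits u)) (a k : ℕ) (i : Fin m) :
    unifProb (evA A a k i) ≤ (2 : ℝ) ^ s * ((v : ℝ) * q / 2 ^ u) ^ a := by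
  classical
  apply unifProb_prod_left
  intro RO
  -- union over states and subsets
  have key : unifProb (fun X : Fin v → Bits u => ∃ p : Bits s × (Finset.univ : Finset (Fin v)).powersetCard a,
      ∀ b ∈ p.2.1, ∃ t : Fin q, fstB n u (advQ n RO (A.qf k i p.1) t) = X b) ≤
      (Fintype.card (Bits s × (Finset.univ : Finset (Fin v)).powersetCard a) : ℝ) * ((q : ℝ) / 2 ^ u) ^ a := by
    apply unifProb_exists_le
    rintro ⟨σ, T, hT⟩
    simp only
    have hTc : T.card = a := (Finset.mem_powersetCard.1 hT).2
    set F : Finset (Bits u) :=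
      Finset.univ.image (fun t : Fin q => fstB n u (advQ n RO (A.qf k i σ) t)) with hF
    have hFc : F.card ≤ q := by
      refine Finset.card_image_le.trans ?_
      simp
    have hset : (Finset.univ.filter (fun X : Fin v → Bits u =>
        ∀ b ∈ T, ∃ t : Fin q, fstB n u (advQ n RO (A.qf k i σ) t) = X b)) =
        Fintype.piFinset (fun b => if b ∈ T then F else Finset.univ) := by
      ext X
      simp only [Finset.mem_filter, Finset.mem_univ, true_and, Fintype.mem_piFinset]
      refine forall_congr' fun b => ?_
      by_cases hb : b ∈ T <;> simp [hb, hF]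
    rw [unifProb_eq, hset, Fintype.card_piFinset, div_le_iff₀ (by exact_mod_cast Fintype.card_pos)]
    have hcard : (Fintype.card (Fin v → Bits u) : ℝ) = ∏ b : Fin v, (2 : ℝ) ^ u := by
      simp [Bits]
    have hpow : ((q : ℝ) / 2 ^ u) ^ a = ∏ b : Fin v, if b ∈ T then ((q : ℝ) / 2 ^ u) else 1 := by
      rw [Finset.prod_ite_mem]
      simp [hTc, div_pow]
    rw [hcard, hpow, ← Finset.prod_mul_distrib]
    push_cast
    refine Finset.prod_le_prod (fun _ _ => by positivity) fun b _ => ?_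
    by_cases hb : b ∈ T
    · simp only [hb, if_true]
      rw [div_mul_cancel₀ _ (by positivity)]
      exact_mod_cast hFc
    · simp [hb, Bits]
  have hle : (Fintype.card (Bits s × (Finset.univ : Finset (Fin v)).powersetCard a) : ℝ)
      ≤ (2 : ℝ) ^ s * (v : ℝ) ^ a := by
    rw [Fintype.card_prod, Fintype.card_coe, Finset.card_powersetCard]
    have : (v.choose a : ℝ) ≤ (v : ℝ) ^ a := by exact_mod_cast Nat.choose_le_pow v a
    simp only [Finset.card_univ, Fintype.card_fin, Bits, Fintype.card_pi, Fintype.card_bool,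
      Finset.prod_const]
    push_cast
    gcongr
  refine le_trans (unifProb_mono ?_) (key.trans ?_)
  · rintro X ⟨T, hT, h⟩
    exact ⟨(mstate A RO X k i, ⟨T, by simp [Finset.mem_powersetCard, hT]⟩), h⟩
  · calc _ ≤ (2 : ℝ) ^ s * (v : ℝ) ^ a * ((q : ℝ) / 2 ^ u) ^ a := by gcongr
      _ = _ := by rw [mul_assoc, ← mul_pow, mul_div_assoc]

lemma chain_main {n u v s q m w R a : ℕ} (hn : 2 * u ≤ n) (ha2 : 2 ≤ a) (hav : a ≤ v)
    (hR : R * (a - 1) ≤ w - 1) (hw : 2 ≤ w)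
    (A : MPC n s q m (Fin v → Bits u)) (ω : (Bits n → Bits n) × (Fin v → Bits u))
    (h1 : ¬ ∃ p : Fin R × Fin m, evA A a p.1 p.2 ω)
    (h2 : ¬ ∃ p : Fin R × Fin m × Fin q × Fin w, evB A p.1 p.2.1 p.2.2.1 p.2.2.2 ω)
    (h3 : ¬ ∃ p : Fin w × Fin w, evC n u v p.1 p.2 ω) :
    ∀ k < R, ∀ i : Fin m, ∀ t < q, mquery A ω.1 ω.2 k i t ≠ simS n u v ω.1 ω.2 (w - 1) := by
  obtain ⟨RO, X⟩ := ω
  simp only at *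
  have hdist : ∀ j < w, ∀ l < j, simS n u v RO X l ≠ simS n u v RO X j := by
    intro j
    induction j using Nat.strong_induction_on with
    | _ j ih =>
      intro hj l hl he
      obtain ⟨j, rfl⟩ : ∃ j', j = j' + 1 := ⟨j - 1, by omega⟩
      apply h3
      refine ⟨(⟨j, by omega⟩, ⟨l, by omega⟩), ?_⟩
      exact ⟨⟨by simp only; omega, ih j (by omega) (by omega)⟩, he.symm⟩
  have hback : ∀ k < R, ∀ i : Fin m, ∀ t < q, ∀ j, j + 1 < w →
      mquery A RO X k i t = simS n u v RO X (j + 1) →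
      (∃ k' < k, ∃ i', ∃ t' < q, mquery A RO X k' i' t' = simS n u v RO X j) ∨
      (∃ t' < t, mquery A RO X k i t' = simS n u v RO X j) := by
    intro k hk i t ht j hj he
    by_contra hcon
    push Not at hcon
    apply h2
    exact ⟨(⟨k, hk⟩, i, ⟨t, ht⟩, ⟨j, by omega⟩), ⟨hdist j (by omega), hcon.1, hcon.2⟩, he⟩
  have main : ∀ k ≤ R, ∀ k' < k, ∀ i : Fin m, ∀ t < q, ∀ j < w,
      mquery A RO X k' i t = simS n u v RO X j → j < k * (a - 1) := by
    intro k
    induction k with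
    | zero => intro _ k' hk'; omega
    | succ k ih =>
      intro hkR k' hk' i t ht j hj he
      have ihk := ih (by omega)
      by_contra hcon
      rw [Nat.succ_mul] at hcon
      by_cases hkk : k' < k
      · have := ihk k' hkk i t ht j hj he
        omega
      obtain rfl : k' = k := by omega
      -- walk down
      have down : ∀ d, k' * (a - 1) + d ≤ j → ∃ t < q, mquery A RO X k' i t = simS n u v RO X (j - d) := by
        intro d
        induction d with
        | zero => intro _; exact ⟨t, ht, he⟩
        | succ d ihd =>
          intro hd
          obtain ⟨t1, ht1, he1⟩ := ihd (by omega)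
          have e : j - d = (j - (d + 1)) + 1 := by omega
          rw [e] at he1
          rcases hback k' (by omega) i t1 ht1 _ (by omega) he1 with ⟨k2, hk2, i2, t2, ht2, he2⟩ | ⟨t2, ht2, he2⟩
          · have := ihk k2 hk2 i2 t2 ht2 _ (by omega) he2
            omega
          · exact ⟨t2, by omega, he2⟩
      apply h1
      have hv : 0 < v := by omega
      let g : Fin a → Fin v := fun b => ⟨(k' * (a - 1) + b) % v, Nat.mod_lt _ hv⟩
      have hg : Function.Injective g := by
        intro b c hbc
        have hb := b.2
        have hc := c.2
        have : (k' * (a - 1) + b) ≡ (k' * (a - 1) + c) [MOD v] := Fin.mk.inj_iff.1 hbc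
        have := Nat.ModEq.add_left_cancel' _ this
        exact Fin.ext (Nat.ModEq.eq_of_lt_of_lt this (by omega) (by omega))
      refine ⟨(⟨k', by omega⟩, i), Finset.univ.map ⟨g, hg⟩, by simp, ?_⟩
      intro b hb
      simp only [Finset.mem_map, Finset.mem_univ, true_and, Function.Embedding.coeFn_mk] at hb
      obtain ⟨c, rfl⟩ := hb
      have hc := c.2
      obtain ⟨t1, ht1, he1⟩ := down (j - (k' * (a - 1) + c)) (by omega)
      have e : j - (j - (k' * (a - 1) + c)) = k' * (a - 1) + c := by omega
      rw [e] at he1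
      refine ⟨⟨t1, ht1⟩, ?_⟩
      simp only
      rw [he1]
      unfold simS
      rw [fstB_simStr hn]
      simp [getX, g, Nat.mod_lt _ hv]
  intro k hk i t ht he
  have := main R le_rfl k hk i t ht (w - 1) (by omega) he
  omega

end Helpers

/-- **Lemma A.1 (quantitative form).**
There is an absolute constant `K` such that, in the SimLine setting with
`u > log₂ q + log₂ v`, `h := s/(u − log₂ q − log₂ v) + 1 ≤ v`, for every deterministic
MPC algorithm and every number of rounds `R` with `1 ≤ R ≤ w/h − 1`, the probability over
uniformly random `(RO, X)` that some machine queries the final SimLine string `s_w`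
during the first `R` rounds (rounds `0, …, R−1`) is at most
`K·R·(m·2^(−(u − log₂q − log₂v)) + w·m·q·2^(−u) + w²·2^(−u))`.
(Here `simS … (w-1)` is the paper's `s_w`.) -/
theorem stmt13 : ∃ K : ℝ, 0 < K ∧
    ∀ (n u v w s q m : ℕ), 1 ≤ u → 2 * u ≤ n → 2 ≤ v → 2 ≤ w → 1 ≤ s → 1 ≤ q → 1 ≤ m →
    Real.logb 2 q + Real.logb 2 v < (u : ℝ) →
    ∀ h : ℝ, h = (s : ℝ) / ((u : ℝ) - Real.logb 2 q - Real.logb 2 v) + 1 → h ≤ (v : ℝ) →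
    ∀ (A : MPC n s q m (Fin v → Bits u)) (R : ℕ), 1 ≤ R → (R : ℝ) ≤ (w : ℝ) / h - 1 →
    unifProb (fun ω : (Bits n → Bits n) × (Fin v → Bits u) =>
      ∃ k ≤ R - 1, ∃ i : Fin m, ∃ t < q,
        mquery A ω.1 ω.2 k i t = simS n u v ω.1 ω.2 (w - 1)) ≤
    K * (R : ℝ) *
      ((m : ℝ) * (2 : ℝ) ^ (-((u : ℝ) - Real.logb 2 q - Real.logb 2 v)) +
        (w : ℝ) * m * q * (2 : ℝ) ^ (-(u : ℝ)) +
        (w : ℝ) ^ 2 * (2 : ℝ) ^ (-(u : ℝ))) := by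
  refine ⟨1, one_pos, ?_⟩
  intro n u v w s q m hu hn hv hw hs hq hm hlog h hh hhv A R hR1 hR
  set d : ℝ := (u : ℝ) - Real.logb 2 q - Real.logb 2 v with hd
  have hdpos : 0 < d := by rw [hd]; linarith
  have hspos : (0 : ℝ) < s := by exact_mod_cast hs
  have hqpos : (0 : ℝ) < q := by exact_mod_cast hq
  have hvpos : (0 : ℝ) < v := by exact_mod_cast (by omega : 0 < v)
  have hsd : 0 < (s : ℝ) / d := by positivity
  have hh1 : 1 < h := by rw [hh]; linarith
  have hah : h ≤ (⌈h⌉₊ : ℝ) := Nat.le_ceil h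
  have hav : ⌈h⌉₊ ≤ v := Nat.ceil_le.2 hhv
  have ha2 : 2 ≤ ⌈h⌉₊ := by
    have : (1 : ℝ) < (⌈h⌉₊ : ℝ) := lt_of_lt_of_le hh1 hah
    have : 1 < ⌈h⌉₊ := by exact_mod_cast this
    omega
  have halt : (⌈h⌉₊ : ℝ) < h + 1 := Nat.ceil_lt_add_one (by linarith)
  have hRg : R * (⌈h⌉₊ - 1) ≤ w - 1 := by
    have h1 : (R : ℝ) * h ≤ w - h := by
      have : ((R : ℝ) + 1) ≤ w / h := by linarith
      rw [le_div_iff₀ (by linarith)] at this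
      linarith
    have h2 : (R : ℝ) * ((⌈h⌉₊ : ℝ) - 1) ≤ R * h := by
      apply mul_le_mul_of_nonneg_left (by linarith) (by positivity)
    have h3 : (R : ℝ) * ((⌈h⌉₊ : ℝ) - 1) ≤ w - 1 := by linarith
    have : ((R * (⌈h⌉₊ - 1) : ℕ) : ℝ) ≤ ((w - 1 : ℕ) : ℝ) := by
      push_cast [Nat.cast_sub (by omega : 1 ≤ ⌈h⌉₊), Nat.cast_sub (by omega : 1 ≤ w)]
      exact h3
    exact_mod_cast this
  set a := ⌈h⌉₊ with ha
  have h2d : (v : ℝ) * q / 2 ^ u = (2 : ℝ) ^ (-d) := by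
    rw [hd, neg_sub, Real.rpow_sub two_pos, Real.rpow_logb two_pos (by norm_num) hvpos,
      Real.rpow_sub two_pos, Real.rpow_logb two_pos (by norm_num) hqpos, Real.rpow_natCast]
    field_simp
  have hAbound : (2 : ℝ) ^ s * ((v : ℝ) * q / 2 ^ u) ^ a ≤ (2 : ℝ) ^ (-d) := by
    rw [h2d, ← Real.rpow_natCast ((2 : ℝ) ^ (-d)) a, ← Real.rpow_mul two_pos.le,
      ← Real.rpow_natCast 2 s, ← Real.rpow_add two_pos]
    apply Real.rpow_le_rpow_of_exponent_le one_le_two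
    have h1 : (s : ℝ) / d ≤ a - 1 := by linarith
    rw [div_le_iff₀ hdpos] at h1
    nlinarith
  have hu2 : (2 : ℝ) ^ (-(u : ℝ)) = ((2 : ℝ) ^ u)⁻¹ := by
    rw [Real.rpow_neg two_pos.le, Real.rpow_natCast]
  have pA : unifProb (fun ω => ∃ p : Fin R × Fin m, evA A a p.1 p.2 ω) ≤
      ((R : ℝ) * m) * (2 : ℝ) ^ (-d) := by
    have := unifProb_exists_le (fun p : Fin R × Fin m => evA A a p.1 p.2) _
      (fun p => (evA_le A a p.1 p.2).trans hAbound)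
    simpa using this
  have pB : unifProb (fun ω => ∃ p : Fin R × Fin m × Fin q × Fin w,
      evB A p.1 p.2.1 p.2.2.1 p.2.2.2 ω) ≤ ((R : ℝ) * (m * (q * w))) * ((2 : ℝ) ^ u)⁻¹ := by
    have := unifProb_exists_le (fun p : Fin R × Fin m × Fin q × Fin w =>
      evB A p.1 p.2.1 p.2.2.1 p.2.2.2) _ (fun p => evB_le hn A p.1 p.2.1 p.2.2.1 p.2.2.2)
    simpa using this
  have pC : unifProb (fun ω => ∃ p : Fin w × Fin w, evC n u v p.1 p.2 ω) ≤
      ((w : ℝ) * w) * ((2 : ℝ) ^ u)⁻¹ := by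
    have := unifProb_exists_le (fun p : Fin w × Fin w =>
      evC n u v p.1 p.2) _ (fun p => evC_le hn p.1 p.2)
    simpa using this
  have hsub := unifProb_mono (P := fun ω : (Bits n → Bits n) × (Fin v → Bits u) =>
      ∃ k ≤ R - 1, ∃ i : Fin m, ∃ t < q,
        mquery A ω.1 ω.2 k i t = simS n u v ω.1 ω.2 (w - 1))
      (Q := fun ω => (∃ p : Fin R × Fin m, evA A a p.1 p.2 ω) ∨
        ((∃ p : Fin R × Fin m × Fin q × Fin w, evB A p.1 p.2.1 p.2.2.1 p.2.2.2 ω) ∨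
        (∃ p : Fin w × Fin w, evC n u v p.1 p.2 ω))) (by
    rintro ω ⟨k, hk, i, t, ht, he⟩
    by_contra hcon
    rw [not_or, not_or] at hcon
    exact chain_main hn ha2 hav hRg hw A ω hcon.1 hcon.2.1 hcon.2.2 k (by omega) i t ht he)
  have hor1 := unifProb_or (fun ω : (Bits n → Bits n) × (Fin v → Bits u) =>
      ∃ p : Fin R × Fin m, evA A a p.1 p.2 ω)
    (fun ω => (∃ p : Fin R × Fin m × Fin q × Fin w, evB A p.1 p.2.1 p.2.2.1 p.2.2.2 ω) ∨
        (∃ p : Fin w × Fin w, evC n u v p.1 p.2 ω))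
  have hor2 := unifProb_or (fun ω : (Bits n → Bits n) × (Fin v → Bits u) =>
      ∃ p : Fin R × Fin m × Fin q × Fin w, evB A p.1 p.2.1 p.2.2.1 p.2.2.2 ω)
    (fun ω => ∃ p : Fin w × Fin w, evC n u v p.1 p.2 ω)
  have hCR : ((w : ℝ) * w) * ((2 : ℝ) ^ u)⁻¹ ≤ R * (((w : ℝ) * w) * ((2 : ℝ) ^ u)⁻¹) := by
    apply le_mul_of_one_le_left (by positivity)
    exact_mod_cast hR1
  rw [hu2]
  calc _ ≤ ((R : ℝ) * m) * (2 : ℝ) ^ (-d) + (((R : ℝ) * (m * (q * w))) * ((2 : ℝ) ^ u)⁻¹ +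
        R * (((w : ℝ) * w) * ((2 : ℝ) ^ u)⁻¹)) := by linarith
    _ = _ := by ring
end
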